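/- arXiv:math/0307161 — 2 statements merged into one kernel-verified Lean document; each statement's English description precedes it below -/
import Mathlib

section
/- Let (R,m) be a complete Noetherian local integral domain of Krull dimension d containing a field of characteristic p > 0, let f_1,…,f_n, f_0 ∈ R, and let A = R[T_1,…,T_n]/(f_1T_1 + ⋯ + f_nT_n + f_0) be the forcing algebra. Then f_0 belongs to the tight closure (f_1,…,f_n)^* if and only if the d-th local cohomology H^d_m(A) of A, regarded as an R-module with support in m, is nonzero. -/
/-!
Let `k` be the residue field of `R` and `m` its maximal ideal. By Cohen's structure theorem `R` is a
finite extension of a power series ring `S = k⟦X_1, …, X_d⟧`, the variables mapping to parameters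
`x_1, …, x_d` of `R` (`exists_noether_normalization`). The coefficient field exists because a field
of characteristic `p` lifts along square-zero extensions (`exists_lift_sq_zero`).

Write `π = x_1 ⋯ x_d`. For an arbitrary module `M`, the cohomology `H^d_m(M)` is the direct limit of
the modules `M / (x_1 ^ t, …, x_d ^ t) M`, and so vanishes if and only if for all `t` and `z ∈ M`
some `π ^ s z` lies in `(x_1 ^ (s + t), …, x_d ^ (s + t)) M` (`LocCoh.subsingleton_iff`). As
`localCohomology` is the direct limit of `Ext^d (R / m ^ t, M)`, this is proved on an injective
resolution `E` of `M`. By the Artin–Rees lemma the torsion submodules of an injective module still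
satisfy Baer's criterion, hence map onto their localizations at one more element, and the fraction
`z / π ^ t` is turned into a torsion cocycle of `E` one element `x_j` at a time (`CechRel`).

Suppose first that `H^d_m(A) ≠ 0`, and let `z` represent a nonzero class. A `k`-linear functional
`l` that does not vanish on it yields the nonzero `S`-linear map
`y ↦ ∑_a l ([y / X ^ (a + 1)]) X ^ a` from `A` to `S` (`exists_functional_of_cech_ne_zero`), and
this in turn a nonzero `R`-linear map `ψ : A → R` (`exists_functional_of_finite_extension`).
If `c = ψ z ≠ 0`, applying `a ↦ ψ (a z)` to `f_0 ^ q = - ∑ f_i ^ q T_i ^ q` shows that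
`c f_0 ^ q ∈ I^[q]` for all `q` (`mem_tightClosure_of_functional`).

Conversely, let `c f_0 ^ q = ∑ f_i ^ q v_i` for large `q`. Then the iterated Frobenius of `R` extends
to a homomorphism from `A` to the fraction field of `R` with `T_i ↦ - v_i / c`. If `H^d_m(A) = 0`,
then `π ^ s ∈ (x_1 ^ (s + 1), …, x_d ^ (s + 1)) A` for some `s`. Applying the homomorphism and
clearing denominators gives `c ^ D π ^ (s q) ∈ (x_1 ^ ((s + 1) q), …, x_d ^ ((s + 1) q)) R` with `D`
independent of `q` (`exists_uniform_multiplier`). An `S`-linear map from `R` to `S` carries this to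
a nonzero power series all of whose coefficients vanish (`not_uniform_multiplier`).
-/

/-- The Frobenius power `I^[q]` of an ideal. -/
def bracketPow {R : Type} [CommRing R] (I : Ideal R) (q : ℕ) : Ideal R :=
  Ideal.span ((fun a => a ^ q) '' (I : Set R))

/-- The tight closure of an ideal `I` in characteristic `p`. -/
def tightClosure {R : Type} [CommRing R] (p : ℕ) (I : Ideal R) : Set R :=
  {f | ∃ c : R, c ≠ 0 ∧ ∃ e₀ : ℕ, ∀ e ≥ e₀, c * f ^ p ^ e ∈ bracketPow I (p ^ e)}

/-- The forcing algebra `R[T_1,…,T_n]/(f_1 T_1 + ⋯ + f_n T_n + f_0)`. -/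
abbrev forcingAlgebra (R : Type) [CommRing R] (n : ℕ) (f : Fin n → R) (f0 : R) : Type :=
  MvPolynomial (Fin n) R ⧸
    Ideal.span {(∑ i, MvPolynomial.C (f i) * MvPolynomial.X i) + MvPolynomial.C f0}

/-! ### Torsion submodules of injective modules -/

section Torsion
variable {R : Type} [CommRing R]

/-- The submodule of a module `N` of elements killed by some power of each of
`x 0, …, x (j - 1)`. -/
def torsSub (x : ℕ → R) (j : ℕ) (N : Type) [AddCommGroup N] [Module R N] : Submodule R N where
  carrier := {e | ∀ i < j, ∃ n, x i ^ n • e = 0}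
  zero_mem' := fun i _ => ⟨0, by simp⟩
  add_mem' := by
    intro a b ha hb i hi
    obtain ⟨n, hn⟩ := ha i hi
    obtain ⟨k, hk⟩ := hb i hi
    refine ⟨n + k, ?_⟩
    rw [smul_add, pow_add, mul_smul, mul_smul, hk, smul_comm, hn]; simp
  smul_mem' := by
    intro c a ha i hi
    obtain ⟨n, hn⟩ := ha i hi
    exact ⟨n, by rw [smul_comm, hn, smul_zero]⟩

lemma mem_torsSub {x : ℕ → R} {j : ℕ} {N : Type} [AddCommGroup N] [Module R N] {e : N} :
    e ∈ torsSub x j N ↔ ∀ i < j, ∃ n, x i ^ n • e = 0 := Iff.rfl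

lemma mem_torsSub_succ {x : ℕ → R} {j : ℕ} {N : Type} [AddCommGroup N] [Module R N] {e : N} :
    e ∈ torsSub x (j + 1) N ↔ e ∈ torsSub x j N ∧ ∃ n, x j ^ n • e = 0 := by
  simp only [mem_torsSub, Nat.lt_succ_iff_lt_or_eq]
  constructor
  · intro h
    exact ⟨fun i hi => h i (Or.inl hi), h j (Or.inr rfl)⟩
  · rintro ⟨h1, h2⟩ i (hi | rfl)
    · exact h1 i hi
    · exact h2

lemma map_mem_torsSub {x : ℕ → R} {j : ℕ} {N N' : Type} [AddCommGroup N] [Module R N]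
    [AddCommGroup N'] [Module R N'] (f : N →ₗ[R] N') {e : N} (he : e ∈ torsSub x j N) :
    f e ∈ torsSub x j N' := by
  intro i hi
  obtain ⟨n, hn⟩ := he i hi
  exact ⟨n, by rw [← map_smul, hn, map_zero]⟩

/-- Baer's extension property for a submodule `N` of `E`: maps from ideals into `N` are
multiplication by an element of `N`. -/
def BaerSub {E : Type} [AddCommGroup E] [Module R E] (N : Submodule R E) : Prop :=
  ∀ (I : Ideal R) (g : I →ₗ[R] E), (∀ a, g a ∈ N) → ∃ y ∈ N, ∀ a : I, g a = (a : R) • y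

variable {E : Type} [AddCommGroup E] [Module R E]

/-- By the Artin–Rees lemma, the `x`-power torsion of a module with Baer's property has Baer's
property. -/
lemma BaerSub.torsion [IsNoetherianRing R] {N N' : Submodule R E} (hN : BaerSub N) (x : R)
    (hN' : ∀ e, e ∈ N' ↔ e ∈ N ∧ ∃ n, x ^ n • e = 0) : BaerSub N' := by
  intro I g hg
  -- a common power of `x` kills the image of `g`
  have hn : ∃ n, ∀ a : I, x ^ n • g a = 0 := by
    obtain ⟨S, hS⟩ := (IsNoetherian.noetherian (⊤ : Submodule R I))
    choose n hn using fun a : I => ((hN' _).1 (hg a)).2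
    refine ⟨S.sup n, fun a => ?_⟩
    have ha : a ∈ Submodule.span R (S : Set I) := by rw [hS]; trivial
    induction ha using Submodule.span_induction with
    | mem b hb =>
      obtain ⟨k, hk⟩ := Nat.exists_eq_add_of_le (Finset.le_sup (f := n) hb)
      rw [hk, pow_add, mul_comm, mul_smul, hn, smul_zero]
    | zero => simp
    | add b c _ _ hb hc => rw [map_add, smul_add, hb, hc, add_zero]
    | smul r b _ hb => rw [map_smul, smul_comm, hb, smul_zero]
  obtain ⟨n, hn⟩ := hn
  obtain ⟨k, hk⟩ := Ideal.exists_pow_inf_eq_pow_smul (Ideal.span {x}) I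
  have hAR : ∀ r : R, x ^ (n + k) * r ∈ I → ∃ b ∈ I, x ^ (n + k) * r = x ^ n * b := by
    intro r hr
    have h1 : x ^ (n + k) * r ∈ (Ideal.span {x} ^ (n + k) • ⊤ ⊓ I : Ideal R) := by
      refine ⟨?_, hr⟩
      rw [Ideal.span_singleton_pow, smul_eq_mul, Ideal.mul_top]
      exact Ideal.mul_mem_right _ _ (Ideal.mem_span_singleton_self _)
    rw [hk (n + k) (by omega), Nat.add_sub_cancel, Ideal.span_singleton_pow, smul_eq_mul,
      Ideal.mem_span_singleton_mul] at h1
    obtain ⟨b, hb, hb'⟩ := h1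
    exact ⟨b, hb.2, hb'.symm⟩
  let f1 : R →ₗ.[R] E := ⟨I, g⟩
  let f2 : R →ₗ.[R] E := ⟨Ideal.span {x ^ (n + k)}, 0⟩
  have hag : ∀ (a : f1.domain) (b : f2.domain), (a : R) = b → f1 a = f2 b := by
    rintro ⟨a, ha⟩ ⟨b, hb⟩ (h : a = b)
    subst h
    change g ⟨a, ha⟩ = 0
    obtain ⟨r, rfl⟩ := Ideal.mem_span_singleton'.1 hb
    obtain ⟨b, hb, hb'⟩ := hAR r (by rw [mul_comm]; exact ha)
    have : (⟨r * x ^ (n + k), ha⟩ : I) = x ^ n • ⟨b, hb⟩ := by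
      apply Subtype.ext
      simp only [SetLike.val_smul, smul_eq_mul]
      rw [← hb', mul_comm]
    rw [this, map_smul, hn]
  have hs1 := (LinearPMap.left_le_sup f1 f2 hag)
  have hs2 := (LinearPMap.right_le_sup f1 f2 hag)
  obtain ⟨y, hy, hy'⟩ := hN (f1.sup f2 hag).domain (f1.sup f2 hag).toFun (by
    rintro ⟨c, hc⟩
    obtain ⟨a, ha, b, hb, rfl⟩ := Submodule.mem_sup.1 hc
    have := LinearPMap.sup_apply hag ⟨a, ha⟩ ⟨b, hb⟩ ⟨a + b, hc⟩ rfl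
    have h0 : (f1.sup f2 hag).toFun ⟨a + b, hc⟩ = g ⟨a, ha⟩ + 0 := this
    rw [h0, add_zero]
    exact ((hN' _).1 (hg _)).1)
  refine ⟨y, (hN' _).2 ⟨hy, n + k, ?_⟩, ?_⟩
  · have h2 : x ^ (n + k) ∈ f2.domain := Ideal.mem_span_singleton_self _
    have := hs2.2 (x := ⟨_, h2⟩) (y := ⟨_, hs2.1 h2⟩) rfl
    rw [← hy' ⟨x ^ (n + k), hs2.1 h2⟩]
    exact this.symm
  · rintro ⟨a, ha⟩
    have := hs1.2 (x := ⟨a, ha⟩) (y := ⟨_, hs1.1 ha⟩) rfl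
    rw [← hy' ⟨a, hs1.1 ha⟩]
    exact this

lemma baerSub_torsSub [IsNoetherianRing R] (hE : Module.Baer R E) (x : ℕ → R) (j : ℕ) :
    BaerSub (torsSub x j E) := by
  induction j with
  | zero =>
    intro I g _
    obtain ⟨h, hh⟩ := hE I g
    refine ⟨h 1, fun i hi => absurd hi (by omega), fun a => ?_⟩
    rw [← hh a a.2, ← map_smul, smul_eq_mul, mul_one]
  | succ j ih => exact ih.torsion (x j) fun e => mem_torsSub_succ

/-- An element `e` of a module with Baer's property becomes divisible by `x ^ n` after
localization at `x`. -/
lemma BaerSub.lift [IsNoetherianRing R] {N : Submodule R E} (hN : BaerSub N) (x : R) (n : ℕ)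
    {e : E} (he : e ∈ N) : ∃ y ∈ N, ∃ u, x ^ (u + n) • y = x ^ u • e := by
  -- the annihilators of the powers of `x` stabilize
  obtain ⟨u, hu⟩ := monotone_stabilizes_iff_noetherian.2
    (inferInstance : IsNoetherian R R)
    ⟨fun u => LinearMap.ker (LinearMap.lsmul R R (x ^ u)), by
      intro a b hab r hr
      obtain ⟨k, rfl⟩ := Nat.exists_eq_add_of_le hab
      simp only [LinearMap.mem_ker, LinearMap.lsmul_apply, smul_eq_mul] at hr ⊢
      rw [pow_add, mul_right_comm, hr, zero_mul]⟩
  let f : R →ₗ[R] R := LinearMap.lsmul R R (x ^ (u + n))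
  let φ : R →ₗ[R] E := LinearMap.toSpanSingleton R E (x ^ u • e)
  have hle : LinearMap.ker f ≤ LinearMap.ker φ := by
    intro r hr
    have h1 : r ∈ LinearMap.ker (LinearMap.lsmul R R (x ^ u)) := by
      have := hu (u + n) (by omega)
      exact this.ge hr
    simp only [LinearMap.mem_ker, LinearMap.lsmul_apply, smul_eq_mul] at h1
    simp only [φ, LinearMap.mem_ker, LinearMap.toSpanSingleton_apply]
    rw [smul_smul, mul_comm, h1, zero_smul]
  let g : LinearMap.range f →ₗ[R] E :=
    (LinearMap.ker f).liftQ φ hle ∘ₗ f.quotKerEquivRange.symm.toLinearMap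
  have hg : ∀ r, g ⟨f r, r, rfl⟩ = φ r := by
    intro r
    have : f.quotKerEquivRange.symm ⟨f r, r, rfl⟩ = (LinearMap.ker f).mkQ r := by
      rw [LinearEquiv.symm_apply_eq]; rfl
    simp only [g, LinearMap.comp_apply, LinearEquiv.coe_coe, this]
    rfl
  obtain ⟨y, hy, hy'⟩ := hN (LinearMap.range f) g (by
    rintro ⟨_, r, rfl⟩
    rw [hg]
    exact N.smul_mem _ (N.smul_mem _ he))
  refine ⟨y, hy, u, ?_⟩
  have h1 := hy' ⟨f 1, 1, rfl⟩
  rw [hg] at h1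
  simp only [φ, f, LinearMap.toSpanSingleton_apply, one_smul, LinearMap.lsmul_apply, smul_eq_mul,
    mul_one] at h1
  exact h1.symm

end Torsion

/-! ### Fractions and torsion cocycles -/

section Chase
variable {R : Type} [CommRing R] {M : Type} [AddCommGroup M] [Module R M]
  {E : ℕ → Type} [∀ i, AddCommGroup (E i)] [∀ i, Module R (E i)]

/-- The submodule `(x 0 ^ s, …, x (j - 1) ^ s) M` of `M`. -/
def powSub (x : ℕ → R) (M : Type) [AddCommGroup M] [Module R M] (j s : ℕ) : Submodule R M :=
  Ideal.span ((fun i => x i ^ s) '' Set.Iio j) • ⊤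

lemma powSub_zero (x : ℕ → R) (s : ℕ) : powSub x M 0 s = ⊥ := by
  simp [powSub]

lemma smul_mem_powSub (x : ℕ → R) {j i : ℕ} (hi : i < j) (s : ℕ) (m : M) :
    x i ^ s • m ∈ powSub x M j s :=
  Submodule.smul_mem_smul (Ideal.subset_span ⟨i, hi, rfl⟩) trivial

lemma powSub_succ (x : ℕ → R) (j s : ℕ) (q : M) :
    q ∈ powSub x M (j + 1) s ↔ ∃ q' ∈ powSub x M j s, ∃ m, q = q' + x j ^ s • m := by
  have h : Set.Iio (j + 1) = insert j (Set.Iio j) := by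
    ext i; simp only [Set.mem_Iio, Set.mem_insert_iff]; omega
  unfold powSub
  rw [h, Set.image_insert_eq, Ideal.span_insert, Submodule.sup_smul, Submodule.mem_sup]
  constructor
  · rintro ⟨a, ha, b, hb, rfl⟩
    rw [Submodule.ideal_span_singleton_smul] at ha
    obtain ⟨m, -, rfl⟩ := (Submodule.mem_smul_pointwise_iff_exists _ _ _).1 ha
    exact ⟨b, hb, m, add_comm _ _⟩
  · rintro ⟨b, hb, m, rfl⟩
    exact ⟨_, Submodule.smul_mem_smul (Ideal.mem_span_singleton_self _) trivial, b, hb,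
      add_comm _ _⟩

/-- Multiplying `(x 0 ^ s, …, x (j - 1) ^ s) M` by `(x 0 ⋯ x (j - 1)) ^ v` raises the
exponents by `v`. -/
lemma prod_smul_mem_powSub (x : ℕ → R) (j s v : ℕ) {q : M} (hq : q ∈ powSub x M j s) :
    (∏ i ∈ Finset.range j, x i) ^ v • q ∈ powSub x M j (s + v) := by
  unfold powSub at hq ⊢
  induction hq using Submodule.smul_induction_on' with
  | smul r hr m _ =>
    rw [smul_smul]
    refine Submodule.smul_mem_smul ?_ trivial
    induction hr using Submodule.span_induction with
    | mem r hr =>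
      obtain ⟨i, hi, rfl⟩ := hr
      have : x i ∣ ∏ i ∈ Finset.range j, x i := Finset.dvd_prod_of_mem _ (by simpa using hi)
      obtain ⟨c, hc⟩ := this
      have h2 : (∏ i ∈ Finset.range j, x i) ^ v * x i ^ s = c ^ v * x i ^ (s + v) := by
        rw [hc]; ring
      simp only [h2]
      exact Ideal.mul_mem_left _ _ (Ideal.subset_span ⟨i, hi, rfl⟩)
    | zero => simp
    | add a b _ _ ha hb => rw [mul_add]; exact add_mem ha hb
    | smul c a _ ha => rw [smul_eq_mul, mul_left_comm]; exact Ideal.mul_mem_left _ _ ha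
  | add a _ b _ ha hb => rw [smul_add]; exact add_mem ha hb

variable (δ : ∀ i, E i →ₗ[R] E (i + 1)) (ε : M →ₗ[R] E 0) (x : ℕ → R)

/-- The coboundaries in degree `i` of the complex of `(x 0, …, x (j - 1))`-power torsion. -/
def bdry (j : ℕ) : ∀ i, Submodule R (E i)
  | 0 => ⊥
  | i + 1 => (torsSub x j (E i)).map (δ i)

/-- `CechRel δ ε x j t m e` says that the torsion cocycle `e` of degree `j` represents the class of
the fraction `m / (x 0 ⋯ x (j - 1)) ^ t` in the local cohomology supported at
`(x 0, …, x (j - 1))`. The recursion is the connecting homomorphism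
`H^j_{(x 0, …, x (j-1))}(M)[1/x j] → H^{j+1}_{(x 0, …, x j)}(M)`. -/
def CechRel : ∀ j : ℕ, ℕ → M → E j → Prop
  | 0, _, m, e => e = ε m
  | j + 1, t, m, e => ∃ z y u b, CechRel j t m z ∧ y ∈ torsSub x j (E j) ∧
      x j ^ (u + t) • y = x j ^ u • z ∧ b ∈ bdry δ x (j + 1) (j + 1) ∧ e = δ j y + b

variable {δ ε x}

lemma CechRel.smul {j t : ℕ} {m : M} {e : E j} (h : CechRel δ ε x j t m e) (r : R) :
    CechRel δ ε x j t (r • m) (r • e) := by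
  induction j generalizing m with
  | zero =>
    have : e = ε m := h
    change _ = _
    rw [this, map_smul]
  | succ j ih =>
    obtain ⟨z, y, u, b, hz, hy, hu, hb, rfl⟩ := h
    refine ⟨r • z, r • y, u, r • b, ih hz, Submodule.smul_mem _ _ hy, ?_,
      Submodule.smul_mem _ _ hb, by simp⟩
    rw [smul_comm, hu, smul_comm]

lemma CechRel.sub {j t : ℕ} {m m' : M} {e e' : E j} (h : CechRel δ ε x j t m e)
    (h' : CechRel δ ε x j t m' e') :
    CechRel δ ε x j t (m - m') (e - e') := by
  induction j generalizing m m' with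
  | zero =>
    have h1 : e = ε m := h
    have h2 : e' = ε m' := h'
    change _ = _
    rw [h1, h2, map_sub]
  | succ j ih =>
    obtain ⟨z, y, u, b, hz, hy, hu, hb, rfl⟩ := h
    obtain ⟨z', y', u', b', hz', hy', hu', hb', rfl⟩ := h'
    refine ⟨z - z', y - y', u + u', b - b', ih hz hz', Submodule.sub_mem _ hy hy', ?_,
      Submodule.sub_mem _ hb hb', by simp; abel⟩
    have h1 : x j ^ (u + u' + t) • y = x j ^ (u + u') • z := by
      rw [show u + u' + t = u' + (u + t) by ring, pow_add, mul_smul, hu, smul_smul, ← pow_add,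
        add_comm u' u]
    have h2 : x j ^ (u + u' + t) • y' = x j ^ (u + u') • z' := by
      rw [show u + u' + t = u + (u' + t) by ring, pow_add, mul_smul, hu', smul_smul, ← pow_add]
    rw [smul_sub, smul_sub, h1, h2]

lemma CechRel.up {j t : ℕ} {m : M} {e : E j} (h : CechRel δ ε x j t m e) (s : ℕ) :
    CechRel δ ε x j (t + s) ((∏ i ∈ Finset.range j, x i) ^ s • m) e := by
  induction j generalizing m with
  | zero => simpa [CechRel] using h
  | succ j ih =>
    obtain ⟨z, y, u, b, hz, hy, hu, hb, rfl⟩ := h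
    refine ⟨x j ^ s • z, y, u, b, ?_, hy, ?_, hb, rfl⟩
    · rw [Finset.prod_range_succ, mul_comm, mul_pow, mul_smul]
      exact (ih hz).smul _
    · rw [show u + (t + s) = s + (u + t) by ring, pow_add, mul_smul, hu, smul_comm]

variable [IsNoetherianRing R] (hE : ∀ i, Module.Baer R (E i))
  (hδ : ∀ i e, δ (i + 1) e = 0 ↔ ∃ e', δ i e' = e)
  (hε : Function.Injective ε) (hepsd : ∀ e, δ 0 e = 0 ↔ ∃ m, ε m = e)

include hδ in
omit [IsNoetherianRing R] in
lemma dd_zero (i : ℕ) (e : E i) : δ (i + 1) (δ i e) = 0 := (hδ _ _).2 ⟨e, rfl⟩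

include hE in
lemma exists_lift (j i n : ℕ) {e : E i} (he : e ∈ torsSub x j (E i)) :
    ∃ y ∈ torsSub x j (E i), ∃ u, x j ^ (u + n) • y = x j ^ u • e :=
  (baerSub_torsSub (hE i) x j).lift (x j) n he

include hE hδ in
/-- Local cohomology supported at `j` elements vanishes in degrees above `j`. -/
lemma vanish_above (j i : ℕ) (hi : j < i) {e : E i} (he : e ∈ torsSub x j (E i))
    (h0 : δ i e = 0) : e ∈ bdry δ x j i := by
  induction j generalizing i with
  | zero =>
    obtain ⟨i, rfl⟩ : ∃ k, i = k + 1 := ⟨i - 1, by omega⟩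
    obtain ⟨e', rfl⟩ := (hδ _ _).1 h0
    exact ⟨e', fun _ h => absurd h (by omega), rfl⟩
  | succ j ih =>
    obtain ⟨i, rfl⟩ : ∃ k, i = k + 1 + 1 := ⟨i - 2, by omega⟩
    obtain ⟨he, n, hn⟩ := mem_torsSub_succ.1 he
    obtain ⟨e', he', rfl⟩ := ih (i + 2) (by omega) he h0
    obtain ⟨e2, he2, h2⟩ := ih (i + 1) (by omega) (Submodule.smul_mem _ (x j ^ n) he')
      (by rw [map_smul, hn])
    obtain ⟨y, hy, u, hu⟩ := exists_lift hE j i n he2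
    refine ⟨e' - δ i y, mem_torsSub_succ.2
      ⟨Submodule.sub_mem _ he' (map_mem_torsSub _ hy), u + n, ?_⟩, ?_⟩
    · rw [smul_sub, ← map_smul, hu, map_smul, h2, smul_smul, ← pow_add, sub_self]
    · rw [map_sub, dd_zero hδ, sub_zero]

include hE hδ in
/-- A coboundary can be divided by `x j ^ n` by a cocycle, after localization at `x j`. -/
lemma bdry_lift (j n : ℕ) {b : E j} (hb : b ∈ bdry δ x j j) :
    ∃ y ∈ torsSub x j (E j), δ j y = 0 ∧ ∃ v, x j ^ (v + n) • y = x j ^ v • b := by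
  cases j with
  | zero =>
    have : b = 0 := hb
    subst this
    exact ⟨0, zero_mem _, map_zero _, 0, by simp⟩
  | succ j =>
    obtain ⟨a, ha, rfl⟩ := hb
    obtain ⟨y, hy, u, hu⟩ := exists_lift hE (j + 1) j n ha
    exact ⟨δ j y, map_mem_torsSub _ hy, dd_zero hδ _ _, u, by rw [← map_smul, hu, map_smul]⟩

include hδ hepsd in
omit [IsNoetherianRing R] in
lemma CechRel.cocycle {j t : ℕ} {m : M} {e : E j} (h : CechRel δ ε x j t m e) :
    e ∈ torsSub x j (E j) ∧ δ j e = 0 := by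
  induction j generalizing m with
  | zero =>
    have : e = ε m := h
    exact ⟨fun _ h => absurd h (by omega), (hepsd _).2 ⟨m, this.symm⟩⟩
  | succ j ih =>
    obtain ⟨z, y, u, b, hz, hy, hu, ⟨a, ha, rfl⟩, rfl⟩ := h
    obtain ⟨-, h2⟩ := ih hz
    refine ⟨Submodule.add_mem _ (mem_torsSub_succ.2 ⟨map_mem_torsSub _ hy, u + t, ?_⟩)
      (map_mem_torsSub _ ha), ?_⟩
    · rw [← map_smul, hu, map_smul, h2, smul_zero]
    · rw [map_add, dd_zero hδ, dd_zero hδ, add_zero]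

include hE hδ hepsd in
lemma cechRel_exists (j t : ℕ) (m : M) : ∃ e, CechRel δ ε x j t m e := by
  induction j with
  | zero => exact ⟨ε m, rfl⟩
  | succ j ih =>
    obtain ⟨z, hz⟩ := ih
    obtain ⟨y, hy, u, hu⟩ := exists_lift hE j j t (hz.cocycle hδ hepsd).1
    exact ⟨δ j y + 0, z, y, u, 0, hz, hy, hu, zero_mem _, rfl⟩

include hE hδ hepsd in
/-- Every torsion cocycle of degree `j` represents the class of a fraction. -/
lemma cechRel_surj (j : ℕ) {e : E j} (he : e ∈ torsSub x j (E j)) (h0 : δ j e = 0) :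
    ∃ t m, CechRel δ ε x j t m e := by
  induction j with
  | zero =>
    obtain ⟨m, rfl⟩ := (hepsd _).1 h0
    exact ⟨0, m, rfl⟩
  | succ j ih =>
    obtain ⟨he, n, hn⟩ := mem_torsSub_succ.1 he
    obtain ⟨y, hy, rfl⟩ := vanish_above hE hδ j (j + 1) (by omega) he h0
    obtain ⟨t, m, hz⟩ := ih (Submodule.smul_mem _ (x j ^ n) hy) (by rw [map_smul, hn])
    refine ⟨t + n, x j ^ t • (∏ i ∈ Finset.range j, x i) ^ n • m, x j ^ t • x j ^ n • y, y, 0, 0,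
      (hz.up n).smul _, hy, ?_, zero_mem _, (add_zero _).symm⟩
    rw [pow_zero, one_smul, zero_add, smul_smul, ← pow_add]

include hE hδ hε hepsd in
/-- The class of `m / (x 0 ⋯ x (j - 1)) ^ t` vanishes exactly when it does in
the direct limit of the modules `M / (x 0 ^ s, …, x (j - 1) ^ s) M`. -/
lemma CechRel.zero_iff {j t : ℕ} {m : M} {e : E j} (h : CechRel δ ε x j t m e) :
    e ∈ bdry δ x j j ↔
      ∃ s, (∏ i ∈ Finset.range j, x i) ^ s • m ∈ powSub x M j (s + t) := by
  induction j generalizing t m with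
  | zero =>
    have he : e = ε m := h
    simp only [powSub_zero, Submodule.mem_bot, Finset.range_zero, Finset.prod_empty, one_pow,
      one_smul, exists_const]
    change e = 0 ↔ _
    rw [he, map_eq_zero_iff ε hε]
  | succ j ih =>
    obtain ⟨z, y, u, b, hz, hy, hu, hb, rfl⟩ := h
    rw [Submodule.add_mem_iff_left _ hb]
    set π := ∏ i ∈ Finset.range j, x i with hπ
    rw [Finset.prod_range_succ, ← hπ]
    constructor
    · rintro ⟨y0, hy0, hyy⟩
      obtain ⟨hy0, n, hn⟩ := mem_torsSub_succ.1 hy0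
      obtain ⟨t', m', hw⟩ := cechRel_surj hE hδ hepsd j (Submodule.sub_mem _ hy hy0)
        (by rw [map_sub, hyy, sub_self])
      have key := ((hz.up t').smul (x j ^ (u + n))).sub
        ((add_comm t' t ▸ hw.up t).smul (x j ^ (u + n + t)))
      have h0 : x j ^ (u + n) • z - x j ^ (u + n + t) • (y - y0) = 0 := by
        have h1 : x j ^ (u + n + t) • y0 = 0 := by
          rw [show u + n + t = u + t + n by ring, pow_add, mul_smul, hn, smul_zero]
        have h2 : x j ^ (u + n + t) • y = x j ^ (u + n) • z := by
          rw [show u + n + t = n + (u + t) by ring, pow_add, mul_smul, hu, smul_smul, ← pow_add,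
            add_comm n u]
        rw [smul_sub, h1, h2, sub_zero, sub_self]
      rw [h0] at key
      obtain ⟨s, hs⟩ := (ih key).1 (zero_mem _)
      rw [← hπ] at hs
      have h3 := prod_smul_mem_powSub x j _ (u + n) hs
      rw [← hπ] at h3
      refine ⟨s + t' + u + n, (powSub_succ _ _ _ _).2
        ⟨x j ^ (s + t') • (π ^ (u + n) • π ^ s • (x j ^ (u + n) • π ^ t' • m -
          x j ^ (u + n + t) • π ^ t • m')), ?_, (π ^ (u + n) * π ^ s * π ^ t) • m', ?_⟩⟩
      · rw [show s + t' + u + n + t = s + (t + t') + (u + n) by ring]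
        exact Submodule.smul_mem _ _ h3
      · simp only [smul_sub, smul_smul]
        rw [eq_comm, sub_add_eq_add_sub, sub_eq_iff_eq_add]
        congr 1
        · congr 1; ring
        · congr 1; ring
    · rintro ⟨s, hs⟩
      obtain ⟨q, hq, mj, hm⟩ := (powSub_succ _ _ _ _).1 hs
      obtain ⟨w, hw⟩ := cechRel_exists hE hδ hepsd j (t + s) mj
      have key := ((hz.up s).smul (x j ^ s)).sub (hw.smul (x j ^ (s + t)))
      have h1 : x j ^ s • (∏ i ∈ Finset.range j, x i) ^ s • m - x j ^ (s + t) • mj = q := by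
        rw [sub_eq_iff_eq_add, ← hm, smul_smul, ← hπ, mul_pow, mul_comm]
      rw [h1] at key
      have hbd := (ih key).2 ⟨0, by rw [pow_zero, one_smul, zero_add, add_comm]; exact hq⟩
      obtain ⟨hw1, hw2⟩ := hw.cocycle hδ hepsd
      obtain ⟨b', hb', hb0, v, hv⟩ := bdry_lift hE hδ j (s + t) hbd
      refine ⟨y - w - b', mem_torsSub_succ.2 ⟨Submodule.sub_mem _ (Submodule.sub_mem _ hy hw1) hb',
        v + u + s + t, ?_⟩, ?_⟩
      · have e1 : x j ^ (v + u + s + t) • y = x j ^ (v + u + s) • z := by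
          rw [show v + u + s + t = v + s + (u + t) by ring, pow_add, mul_smul, hu, smul_smul,
            ← pow_add]
          congr 2; ring
        have e2 : x j ^ (v + u + s + t) • b' =
            x j ^ (v + u + s) • z - x j ^ (v + u + s + t) • w := by
          rw [show v + u + s + t = u + (v + (s + t)) by ring, pow_add, mul_smul, hv, smul_sub,
            smul_sub]
          simp only [smul_smul, ← pow_add]
          congr 3; ring
        rw [smul_sub, smul_sub, e1, e2]
        abel
      · rw [map_sub, map_sub, hw2, hb0, sub_zero, sub_zero]

include hE hδ hε hepsd in
/-- The torsion subcomplex of an injective resolution of `M` is exact in degree `d` if and only if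
all fractions `m / (x 0 ⋯ x (d - 1)) ^ t` have vanishing class. -/
theorem top_vanish_iff (d : ℕ) :
    (∀ e ∈ torsSub x d (E d), δ d e = 0 → e ∈ bdry δ x d d) ↔
      ∀ (t : ℕ) (m : M), ∃ s, (∏ i ∈ Finset.range d, x i) ^ s • m ∈ powSub x M d (s + t) := by
  constructor
  · intro h t m
    obtain ⟨e, he⟩ := cechRel_exists hE hδ hepsd d t m
    obtain ⟨h1, h2⟩ := he.cocycle hδ hepsd
    exact (he.zero_iff hE hδ hε hepsd).1 (h e h1 h2)
  · intro h e he h0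
    obtain ⟨t, m, hr⟩ := cechRel_surj hE hδ hepsd d he h0
    exact (hr.zero_iff hE hδ hε hepsd).2 (h t m)

end Chase

/-! ### Local cohomology through injective resolutions -/

namespace LocCoh

open CategoryTheory Limits Opposite

variable {R : Type} [CommRing R]

section
variable (K : ChainComplex (ModuleCat.{0} R)ᵒᵖ ℕ) (n : ℕ)

/-- The cohomology class `ξ` is represented by the cocycle `φ`. A chain complex in the opposite
category is a cochain complex of modules, so that cocycles are the module underlying `opcycles`. -/
def OpRep (ξ : (K.homology n).unop) (φ : (K.X n).unop) : Prop :=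
  ∃ z : (K.opcycles n).unop, (K.pOpcycles n).unop.hom z = φ ∧ (K.homologyι n).unop.hom z = ξ

variable {K n}

lemma OpRep.congr {ξ ξ' : (K.homology n).unop} {φ : (K.X n).unop} (h : OpRep K n ξ φ)
    (e : ξ' = ξ) : OpRep K n ξ' φ := e ▸ h

lemma OpRep.exists_cochain (ξ : (K.homology n).unop) :
    ∃ φ, (K.d (n + 1) n).unop.hom φ = 0 ∧ OpRep K n ξ φ := by
  have : Function.Surjective (K.homologyι n).unop.hom :=
    (ModuleCat.epi_iff_surjective _).1 inferInstance
  obtain ⟨z, hz⟩ := this ξ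
  refine ⟨_, ?_, z, rfl, hz⟩
  have h := congrArg Quiver.Hom.unop (K.d_pOpcycles (n + 1) n)
  have h2 := congrArg (fun f => f.hom z) h
  exact h2

lemma OpRep.exists_class {φ : (K.X n).unop} (hφ : (K.d (n + 1) n).unop.hom φ = 0) :
    ∃ ξ, OpRep K n ξ φ := by
  let g : ModuleCat.of R R ⟶ (K.X n).unop := ModuleCat.ofHom (LinearMap.toSpanSingleton R _ φ)
  have hg : K.d (n + 1) n ≫ g.op = 0 := by
    apply Quiver.Hom.unop_inj
    ext
    simpa [g] using hφ
  let k := K.descOpcycles g.op (n + 1) (by simp) hg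
  refine ⟨_, k.unop.hom 1, ?_, rfl⟩
  have h := congrArg Quiver.Hom.unop (K.p_descOpcycles g.op (n + 1) (by simp) hg)
  have h2 := congrArg (fun f => f.hom (1 : R)) h
  refine h2.trans ?_
  simp [g]

lemma OpRep.zero_iff_succ {p : ℕ} {ξ : (K.homology (p + 1)).unop} {φ : (K.X (p + 1)).unop}
    (h : OpRep K (p + 1) ξ φ) : ξ = 0 ↔ ∃ g, (K.d (p + 1) p).unop.hom g = φ := by
  obtain ⟨z, rfl, rfl⟩ := h
  have hinj : Function.Injective (K.pOpcycles (p + 1)).unop.hom :=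
    (ModuleCat.mono_iff_injective _).1 inferInstance
  have hex : (ShortComplex.mk (K.homologyι (p + 1)) (K.fromOpcycles (p + 1) p)
      (by simp)).Exact :=
    ShortComplex.exact_of_f_is_kernel _ (K.homologyIsKernel (p + 1) p (by simp))
  have hex2 := (ShortComplex.ShortExact.moduleCat_exact_iff_function_exact _).1 hex.unop
  constructor
  · intro h
    obtain ⟨g, hg⟩ := (hex2 z).1 h
    refine ⟨g, ?_⟩
    have h := congrArg Quiver.Hom.unop (K.p_fromOpcycles (p + 1) p)
    have h2 := congrArg (fun f => f.hom g) h
    rw [← hg]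
    exact h2.symm
  · rintro ⟨g, hg⟩
    refine (hex2 z).2 ⟨g, hinj ?_⟩
    rw [← hg]
    have h := congrArg Quiver.Hom.unop (K.p_fromOpcycles (p + 1) p)
    exact congrArg (fun f => f.hom g) h

lemma OpRep.zero_iff_zero {ξ : (K.homology 0).unop} {φ : (K.X 0).unop}
    (h : OpRep K 0 ξ φ) : ξ = 0 ↔ φ = 0 := by
  obtain ⟨z, rfl, rfl⟩ := h
  have hinj : Function.Injective (K.pOpcycles 0).unop.hom :=
    (ModuleCat.mono_iff_injective _).1 inferInstance
  have : IsIso (K.homologyι 0) := by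
    infer_instance
  have hinj2 : Function.Injective (K.homologyι 0).unop.hom :=
    (ModuleCat.mono_iff_injective _).1 inferInstance
  rw [map_eq_zero_iff _ hinj, map_eq_zero_iff _ hinj2]

lemma OpRep.map {K L : ChainComplex (ModuleCat.{0} R)ᵒᵖ ℕ} (F : L ⟶ K)
    {ξ : (K.homology n).unop} {φ : (K.X n).unop} (h : OpRep K n ξ φ) :
    OpRep L n ((HomologicalComplex.homologyMap F n).unop.hom ξ) ((F.f n).unop.hom φ) := by
  obtain ⟨z, rfl, rfl⟩ := h
  refine ⟨(HomologicalComplex.opcyclesMap F n).unop.hom z, ?_, ?_⟩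
  · have h := congrArg Quiver.Hom.unop (HomologicalComplex.p_opcyclesMap F n)
    exact congrArg (fun f => f.hom z) h
  · have h := congrArg Quiver.Hom.unop (HomologicalComplex.homologyι_naturality F n)
    exact (congrArg (fun f => f.hom z) h).symm
end

/-- The complex of morphisms to `Y` out of a projective resolution, in the opposite category. -/
noncomputable abbrev homCx {X : ModuleCat.{0} R} (P : ProjectiveResolution X)
    (Y : ModuleCat.{0} R) :
    ChainComplex (ModuleCat.{0} R)ᵒᵖ ℕ :=
  (((linearYoneda R (ModuleCat.{0} R)).obj Y).rightOp.mapHomologicalComplex _).obj P.complex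

/-- The class `ξ` in the functor `Ext`, derived in its first variable, is represented by the cocycle `φ`. -/
def Rep {X : ModuleCat.{0} R} (P : ProjectiveResolution X) {Y : ModuleCat.{0} R} (n : ℕ)
    (ξ : ((Ext R (ModuleCat.{0} R) n).obj (op X)).obj Y) (φ : P.complex.X n ⟶ Y) : Prop :=
  OpRep (homCx P Y) n
    ((P.isoLeftDerivedObj ((linearYoneda R (ModuleCat.{0} R)).obj Y).rightOp n).inv.unop.hom ξ) φ

variable {X Y : ModuleCat.{0} R} {P : ProjectiveResolution X} {n : ℕ}

lemma Rep.exists_cochain (P : ProjectiveResolution X)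
    (ξ : ((Ext R (ModuleCat.{0} R) n).obj (op X)).obj Y) :
    ∃ φ, P.complex.d (n + 1) n ≫ φ = 0 ∧ Rep P n ξ φ :=
  OpRep.exists_cochain (K := homCx P Y) _

lemma Rep.exists_class {φ : P.complex.X n ⟶ Y} (hφ : P.complex.d (n + 1) n ≫ φ = 0) :
    ∃ ξ, Rep P n ξ φ := by
  obtain ⟨ξ, h⟩ := OpRep.exists_class (K := homCx P Y) hφ
  refine ⟨(P.isoLeftDerivedObj
    ((linearYoneda R (ModuleCat.{0} R)).obj Y).rightOp n).hom.unop.hom ξ, ?_⟩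
  refine h.congr ?_
  have h := congrArg Quiver.Hom.unop
    (P.isoLeftDerivedObj ((linearYoneda R (ModuleCat.{0} R)).obj Y).rightOp n).inv_hom_id
  exact congrArg (fun f => f.hom ξ) h

lemma iso_eq_zero_iff (ξ : ((Ext R (ModuleCat.{0} R) n).obj (op X)).obj Y) :
    (P.isoLeftDerivedObj ((linearYoneda R (ModuleCat.{0} R)).obj Y).rightOp n).inv.unop.hom ξ = 0 ↔
      ξ = 0 := by
  have hinj : Function.Injective
    (P.isoLeftDerivedObj ((linearYoneda R (ModuleCat.{0} R)).obj Y).rightOp n).inv.unop.hom :=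
    (ModuleCat.mono_iff_injective _).1 inferInstance
  exact map_eq_zero_iff _ hinj

lemma Rep.zero_iff_succ {p : ℕ} {ξ : ((Ext R (ModuleCat.{0} R) (p + 1)).obj (op X)).obj Y}
    {φ : P.complex.X (p + 1) ⟶ Y} (h : Rep P (p + 1) ξ φ) :
    ξ = 0 ↔ ∃ g, P.complex.d (p + 1) p ≫ g = φ :=
  (iso_eq_zero_iff (P := P) ξ).symm.trans (OpRep.zero_iff_succ h)

lemma Rep.zero_iff_zero {ξ : ((Ext R (ModuleCat.{0} R) 0).obj (op X)).obj Y}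
    {φ : P.complex.X 0 ⟶ Y} (h : Rep P 0 ξ φ) :
    ξ = 0 ↔ φ = 0 :=
  (iso_eq_zero_iff (P := P) ξ).symm.trans (OpRep.zero_iff_zero h)

lemma Rep.map {X' : ModuleCat.{0} R} {P' : ProjectiveResolution X'} (f : X' ⟶ X)
    (F : ProjectiveResolution.Hom P' P f)
    {ξ : ((Ext R (ModuleCat.{0} R) n).obj (op X)).obj Y} {φ : P.complex.X n ⟶ Y}
    (h : Rep P n ξ φ) :
    Rep P' n ((((Ext R (ModuleCat.{0} R) n).map f.op).app Y).hom ξ) (F.hom.f n ≫ φ) := by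
  have := OpRep.map ((((linearYoneda R (ModuleCat.{0} R)).obj Y).rightOp.mapHomologicalComplex
    _).map F.hom) h
  refine this.congr ?_
  have h := congrArg Quiver.Hom.unop (ProjectiveResolution.isoLeftDerivedObj_inv_naturality f P' P
    F.hom F.hom_f_zero_comp_π_f_zero ((linearYoneda R (ModuleCat.{0} R)).obj Y).rightOp n)
  exact congrArg (fun f => f.hom ξ) h

/-- The projection `R / J ^ s → R / J ^ t` for `t ≤ s`. -/
abbrev quotMap (J : Ideal R) {t s : ℕ} (h : t ≤ s) :
    ModuleCat.of R (R ⧸ J ^ s) ⟶ ModuleCat.of R (R ⧸ J ^ t) :=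
  ModuleCat.ofHom (Submodule.mapQ _ _ LinearMap.id (Ideal.pow_le_pow_right h))

/-- Local cohomology is defined as the direct limit of `Ext (R / J ^ t, M)`; it vanishes when every
class dies at a finite stage. -/
lemma subsingleton_localCohomology_iff (J : Ideal R) (n : ℕ) (M : ModuleCat.{0} R) :
    Subsingleton ((localCohomology J n).obj M) ↔
      ∀ (t : ℕ) (ξ : ((Ext R (ModuleCat.{0} R) n).obj (op (ModuleCat.of R (R ⧸ J ^ t)))).obj M),
        ∃ s, ∃ h : t ≤ s, (((Ext R (ModuleCat.{0} R) n).map (quotMap J h).op).app M).hom ξ = 0 := by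
  let D := localCohomology.diagram (localCohomology.idealPowersDiagram J) n
  let c := ((evaluation _ _).obj M).mapCocone (colimit.cocone D)
  have hc : IsColimit c := isColimitOfPreserves ((evaluation _ _).obj M) (colimit.isColimit D)
  change Subsingleton c.pt ↔ _
  constructor
  · intro hs t ξ
    let T : (ℕᵒᵖ)ᵒᵖ := op (op t)
    obtain ⟨k, f, g, hk⟩ := Concrete.isColimit_exists_of_rep_eq (D ⋙ (evaluation _ _).obj M) hc
      (i := T) (j := T) ξ 0 (hs.elim _ _)
    refine ⟨k.unop.unop, f.unop.unop.down.down, ?_⟩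
    refine Eq.trans ?_ (hk.trans ?_)
    · rfl
    · exact map_zero (((D ⋙ (evaluation _ _).obj M).map g).hom)
  · intro h
    refine subsingleton_of_forall_eq 0 fun y => ?_
    obtain ⟨k, ξ, rfl⟩ := Concrete.isColimit_exists_rep (D ⋙ (evaluation _ _).obj M) hc y
    obtain ⟨s, hs, h0⟩ := h k.unop.unop ξ
    let T : (ℕᵒᵖ)ᵒᵖ := op (op s)
    let g : k ⟶ T := (homOfLE hs).op.op
    have h0' : ((D ⋙ (evaluation _ _).obj M).map g).hom ξ = 0 := h0
    have := congrArg (fun f => f.hom ξ) (c.w g)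
    refine Eq.trans this.symm ?_
    change (c.ι.app T).hom (((D ⋙ (evaluation _ _).obj M).map g).hom ξ) = 0
    rw [h0', map_zero]

section
open CochainComplex HomComplex
variable {C : Type 1} [Category.{0} C] [Abelian C] [HasExt.{0} C] {X Y : C}

lemma projExtMk_eq_zero_iff (P : ProjectiveResolution X) (f : P.complex.X 0 ⟶ Y)
    (hf : P.complex.d 1 0 ≫ f = 0) : P.extMk f 1 rfl hf = 0 ↔ f = 0 := by
  simp only [← P.extEquivCohomologyClass.apply_eq_iff_eq,
    ProjectiveResolution.extEquivCohomologyClass_extMk,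
    ProjectiveResolution.extEquivCohomologyClass_zero, CohomologyClass.mk_eq_zero_iff]
  rw [Cocycle.toSingleMk_mem_coboundaries_iff _ _ _ _ _ 1 (by simp)]
  have h0 : IsZero (P.cochainComplex.X 1) :=
    CochainComplex.isZero_of_isStrictlyLE P.cochainComplex 0 1 (by lia)
  constructor
  · rintro ⟨g, hg⟩
    rw [h0.eq_of_src g 0, comp_zero] at hg
    rw [← cancel_epi (P.cochainComplexXIso (-(0 : ℕ)) 0 rfl).hom, comp_zero, ← hg]
  · rintro rfl
    exact ⟨0, by simp⟩

lemma injExtMk_eq_zero_iff (I : InjectiveResolution Y) (f : X ⟶ I.cocomplex.X 0)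
    (hf : f ≫ I.cocomplex.d 0 1 = 0) : I.extMk f 1 rfl hf = 0 ↔ f = 0 := by
  simp only [← I.extEquivCohomologyClass.apply_eq_iff_eq,
    InjectiveResolution.extEquivCohomologyClass_extMk,
    InjectiveResolution.extEquivCohomologyClass_zero, CohomologyClass.mk_eq_zero_iff]
  rw [Cocycle.fromSingleMk_mem_coboundaries_iff _ _ _ _ _ (-1) (by simp)]
  have h0 : IsZero (I.cochainComplex.X (-1)) :=
    CochainComplex.isZero_of_isStrictlyGE I.cochainComplex 0 (-1) (by lia)
  constructor
  · rintro ⟨g, hg⟩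
    rw [h0.eq_of_tgt g 0, zero_comp] at hg
    rw [← cancel_mono (I.cochainComplexXIso (0 : ℕ) 0 rfl).inv, zero_comp, ← hg]
  · rintro rfl
    exact ⟨0, by simp⟩
end

/-- A cocycle has vanishing class in the derived functor `Ext` if and only if it does so in the
derived category `Ext`. -/
lemma Rep.zero_iff {X Y : ModuleCat.{0} R} {P : ProjectiveResolution X} {n : ℕ}
    {ξ : ((Ext R (ModuleCat.{0} R) n).obj (op X)).obj Y}
    {φ : P.complex.X n ⟶ Y} (h : Rep P n ξ φ) (hφ : P.complex.d (n + 1) n ≫ φ = 0) :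
    ξ = 0 ↔ P.extMk φ (n + 1) rfl hφ = 0 := by
  cases n with
  | zero => rw [h.zero_iff_zero, projExtMk_eq_zero_iff]
  | succ p => rw [h.zero_iff_succ, P.extMk_eq_zero_iff φ _ rfl hφ p rfl]

/-- The same criterion with `Ext` of the derived category, which can be computed by injective
resolutions of `M` as well. -/
lemma subsingleton_iff_ext (J : Ideal R) (n : ℕ) (M : ModuleCat.{0} R) :
    Subsingleton ((localCohomology J n).obj M) ↔
      ∀ (t : ℕ) (ξ : Abelian.Ext (ModuleCat.of R (R ⧸ J ^ t)) M n),
        ∃ s, ∃ h : t ≤ s, (Abelian.Ext.mk₀ (quotMap J h)).comp ξ (zero_add n) = 0 := by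
  rw [subsingleton_localCohomology_iff]
  let P := fun t => projectiveResolution (ModuleCat.of R (R ⧸ J ^ t))
  let F : ∀ {t s} (h : t ≤ s), ProjectiveResolution.Hom (P s) (P t) (quotMap J h) :=
    fun h => ⟨ProjectiveResolution.lift (quotMap J h) _ _,
      (HomologicalComplex.congr_hom (ProjectiveResolution.lift_commutes (quotMap J h) _ _) 0)⟩
  refine forall_congr' fun t => ⟨fun H ξ => ?_, fun H ξ => ?_⟩
  · obtain ⟨φ, hφ, rfl⟩ := (P t).extMk_surjective ξ (n + 1) rfl
    obtain ⟨η, hη⟩ := Rep.exists_class hφ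
    obtain ⟨s, h, h0⟩ := H η
    refine ⟨s, h, ?_⟩
    rw [ProjectiveResolution.mk₀_comp_extMk φ _ rfl hφ (F h)]
    exact ((hη.map _ (F h)).zero_iff _).1 h0
  · obtain ⟨φ, hφ, hr⟩ := Rep.exists_cochain (P t) ξ
    obtain ⟨s, h, h0⟩ := H ((P t).extMk φ (n + 1) rfl hφ)
    rw [ProjectiveResolution.mk₀_comp_extMk φ _ rfl hφ (F h)] at h0
    exact ⟨s, h, ((hr.map _ (F h)).zero_iff _).2 h0⟩

/-- Being killed by some power of `J`. -/
def PowTors (J : Ideal R) {N : Type} [AddCommGroup N] [Module R N] (e : N) : Prop :=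
  ∃ t : ℕ, ∀ r ∈ J ^ t, r • e = 0

lemma exists_hom {J : Ideal R} {N : ModuleCat.{0} R} {e : N} {t : ℕ} (h : ∀ r ∈ J ^ t, r • e = 0) :
    ∃ f : ModuleCat.of R (R ⧸ J ^ t) ⟶ N, f.hom (Submodule.Quotient.mk 1) = e :=
  ⟨ModuleCat.ofHom (Submodule.liftQ _ (LinearMap.toSpanSingleton R N e) h), by
    change (1 : R) • e = e
    simp⟩

lemma hom_ext {J : Ideal R} {N : ModuleCat.{0} R} {t : ℕ} {f g : ModuleCat.of R (R ⧸ J ^ t) ⟶ N}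
    (h : f.hom (Submodule.Quotient.mk 1) = g.hom (Submodule.Quotient.mk 1)) : f = g := by
  apply ModuleCat.hom_ext
  apply Submodule.linearMap_qext
  apply LinearMap.ext_ring
  exact h

lemma hom_killed {J : Ideal R} {N : ModuleCat.{0} R} {t : ℕ} (f : ModuleCat.of R (R ⧸ J ^ t) ⟶ N) :
    ∀ r ∈ J ^ t, r • f.hom (Submodule.Quotient.mk 1) = 0 := by
  intro r hr
  rw [← map_smul, ← Submodule.Quotient.mk_smul, smul_eq_mul, mul_one,
    (Submodule.Quotient.mk_eq_zero _).2 hr, map_zero]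

lemma quotMap_one (J : Ideal R) {t s : ℕ} (h : t ≤ s) :
    (quotMap J h).hom (Submodule.Quotient.mk 1) = Submodule.Quotient.mk 1 := rfl

/-- Local cohomology in terms of power torsion elements of an injective resolution: homomorphisms
`R / J ^ t → I^n` are elements of `I^n` killed by `J ^ t`. The set `B` stands for the
coboundaries, whose description differs between degree zero and positive degrees. -/
lemma subsingleton_iff_elt (J : Ideal R) (n : ℕ) (M : ModuleCat.{0} R)
    (I : InjectiveResolution M) (B : Set (I.cocomplex.X n))
    (hB : ∀ (t : ℕ) (f : ModuleCat.of R (R ⧸ J ^ t) ⟶ I.cocomplex.X n)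
      (hf : f ≫ I.cocomplex.d n (n + 1) = 0),
      f.hom (Submodule.Quotient.mk 1) ∈ B ↔ ∃ s, ∃ h : t ≤ s,
        I.extMk (quotMap J h ≫ f) (n + 1) rfl (by simp [hf]) = 0) :
    Subsingleton ((localCohomology J n).obj M) ↔
      ∀ e : I.cocomplex.X n, PowTors J e → (I.cocomplex.d n (n + 1)).hom e = 0 → e ∈ B := by
  rw [subsingleton_iff_ext]
  constructor
  · rintro H e ⟨t, ht⟩ he
    obtain ⟨f, rfl⟩ := exists_hom ht
    have hf : f ≫ I.cocomplex.d n (n + 1) = 0 := hom_ext he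
    rw [hB t f hf]
    obtain ⟨s, h, h0⟩ := H t (I.extMk f (n + 1) rfl hf)
    rw [I.mk₀_comp_extMk] at h0
    exact ⟨s, h, h0⟩
  · intro H t ξ
    obtain ⟨f, hf, rfl⟩ := I.extMk_surjective ξ (n + 1) rfl
    obtain ⟨s, h, h0⟩ := (hB t f hf).1 (H _ ⟨t, hom_killed f⟩
      (by simpa using congrArg (fun g => g.hom (Submodule.Quotient.mk 1)) hf))
    exact ⟨s, h, by rw [I.mk₀_comp_extMk]; exact h0⟩

lemma subsingleton_iff_elt_zero (J : Ideal R) (M : ModuleCat.{0} R)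
    (I : InjectiveResolution M) :
    Subsingleton ((localCohomology J 0).obj M) ↔
      ∀ e : I.cocomplex.X 0, PowTors J e → (I.cocomplex.d 0 1).hom e = 0 → e = 0 := by
  refine subsingleton_iff_elt J 0 M I {0} fun t f hf => ?_
  rw [Set.mem_singleton_iff]
  constructor
  · intro h
    exact ⟨t, le_rfl, (injExtMk_eq_zero_iff I _ _).2 (hom_ext h)⟩
  · rintro ⟨s, h, h0⟩
    exact congrArg (fun g => g.hom (Submodule.Quotient.mk 1)) ((injExtMk_eq_zero_iff I _ _).1 h0)

lemma subsingleton_iff_elt_succ (J : Ideal R) (M : ModuleCat.{0} R) (p : ℕ)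
    (I : InjectiveResolution M) :
    Subsingleton ((localCohomology J (p + 1)).obj M) ↔
      ∀ e : I.cocomplex.X (p + 1), PowTors J e →
        (I.cocomplex.d (p + 1) (p + 2)).hom e = 0 →
          ∃ e', PowTors J e' ∧ (I.cocomplex.d p (p + 1)).hom e' = e := by
  refine subsingleton_iff_elt J (p + 1) M I
    {e | ∃ e', PowTors J e' ∧ (I.cocomplex.d p (p + 1)).hom e' = e} fun t f hf => ?_
  simp only [I.extMk_eq_zero_iff _ _ rfl _ p rfl]
  constructor
  · rintro ⟨e', ⟨s, hs⟩, he⟩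
    have hs' : ∀ r ∈ J ^ (s + t), r • e' = 0 := fun r hr =>
      hs r (Ideal.pow_le_pow_right (by omega) hr)
    obtain ⟨g, rfl⟩ := exists_hom hs'
    exact ⟨s + t, by omega, g, hom_ext he⟩
  · rintro ⟨s, h, g, h0⟩
    exact ⟨_, ⟨s, hom_killed g⟩, congrArg (fun g => g.hom (Submodule.Quotient.mk 1)) h0⟩

/-- Torsion with respect to `J` depends only on generators of `J` up to radical. -/
lemma mem_torsSub_iff [IsNoetherianRing R] {J : Ideal R} (x : ℕ → R) (d : ℕ)
    (hx : (Ideal.span (x '' Set.Iio d)).radical = J)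
    {N : Type} [AddCommGroup N] [Module R N] (e : N) : e ∈ torsSub x d N ↔ PowTors J e := by
  rw [mem_torsSub]
  constructor
  · intro h
    let A : Ideal R := LinearMap.ker (LinearMap.toSpanSingleton R N e)
    have hA : ∀ r, r ∈ A ↔ r • e = 0 := fun r => by simp [A]
    have h1 : J ≤ A.radical := by
      rw [← hx, Ideal.radical_le_radical_iff, Ideal.span_le]
      rintro _ ⟨i, hi, rfl⟩
      obtain ⟨n, hn⟩ := h i hi
      exact ⟨n, (hA _).2 hn⟩
    obtain ⟨k, hk⟩ := Ideal.exists_radical_pow_le_of_fg A (IsNoetherian.noetherian _)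
    exact ⟨k, fun r hr => (hA r).1 (hk (Ideal.pow_right_mono h1 k hr))⟩
  · rintro ⟨t, ht⟩ i hi
    refine ⟨t, ht _ (Ideal.pow_mem_pow ?_ t)⟩
    rw [← hx]
    exact Ideal.le_radical (Ideal.subset_span ⟨i, hi, rfl⟩)

/-- Vanishing of the top local cohomology, for an ideal `J` that is the radical of
`(x 0, …, x (d - 1))`: the cohomology is the direct limit of the modules
`M / (x 0 ^ t, …, x (d - 1) ^ t) M` under multiplication by `x 0 ⋯ x (d - 1)`. -/
theorem subsingleton_iff [IsNoetherianRing R] (J : Ideal R) (x : ℕ → R) (d : ℕ)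
    (hx : (Ideal.span (x '' Set.Iio d)).radical = J) (M : Type) [AddCommGroup M] [Module R M] :
    Subsingleton ((localCohomology J d).obj (ModuleCat.of R M)) ↔
      ∀ (t : ℕ) (m : M), ∃ s, (∏ i ∈ Finset.range d, x i) ^ s • m ∈ powSub x M d (s + t) := by
  let I := injectiveResolution (ModuleCat.of R M)
  have hE : ∀ i, Module.Baer R (I.cocomplex.X i) := fun i =>
    have : Injective (ModuleCat.of R (I.cocomplex.X i)) := I.injective i
    Module.Baer.of_injective (Module.injective_module_of_injective_object R (I.cocomplex.X i))
  have hδ : ∀ i (e : I.cocomplex.X (i + 1)), (I.cocomplex.d (i + 1) (i + 2)).hom e = 0 ↔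
      ∃ e', (I.cocomplex.d i (i + 1)).hom e' = e := fun i =>
    (ShortComplex.ShortExact.moduleCat_exact_iff_function_exact _).1 (I.exact_succ i)
  let ε : ModuleCat.of R M ⟶ I.cocomplex.X 0 := I.ι.f 0
  have hε : Function.Injective ε.hom :=
    (ModuleCat.mono_iff_injective _).1 (inferInstanceAs (Mono (I.ι.f 0)))
  have hepsd : ∀ e, (I.cocomplex.d 0 1).hom e = 0 ↔ ∃ m, ε.hom m = e :=
    (ShortComplex.ShortExact.moduleCat_exact_iff_function_exact _).1 I.exact₀
  rw [← top_vanish_iff (E := fun i => I.cocomplex.X i) (δ := fun i => (I.cocomplex.d i (i + 1)).hom)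
    (x := x) hE hδ hε hepsd d]
  cases d with
  | zero =>
    rw [subsingleton_iff_elt_zero J _ I]
    refine forall_congr' fun e => ?_
    rw [mem_torsSub_iff x 0 hx]
    rfl
  | succ p =>
    rw [subsingleton_iff_elt_succ J _ p I]
    refine forall_congr' fun e => ?_
    rw [mem_torsSub_iff x (p + 1) hx]
    simp only [bdry, Submodule.mem_map, mem_torsSub_iff x (p + 1) hx]

end LocCoh

/-! ### Coefficient fields -/

section CoefficientField
open Polynomial

/-- A field of characteristic `p` lifts along square-zero extensions: a maximal partial lift that
contains the canonical lift `x ^ p ↦ c ^ p` of the subfield of `p`-th powers is defined on the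
whole field, because `X ^ p - a ^ p` is the minimal polynomial of any `a` not yet reached. -/
lemma exists_lift_sq_zero {k C : Type} [Field k] [CommRing C] (p : ℕ) [hp : Fact p.Prime]
    [CharP k p] [CharP C p] (N : Ideal C) (hN : N ^ 2 = ⊥) (u : k →+* C ⧸ N) :
    ∃ v : k →+* C, (Ideal.Quotient.mk N).comp v = u := by
  let T : Subring (k × C) := RingHom.eqLocus (u.comp (RingHom.fst k C))
    ((Ideal.Quotient.mk N).comp (RingHom.snd k C))
  have hT : ∀ z, z ∈ T ↔ u z.1 = Ideal.Quotient.mk N z.2 := fun z => Iff.rfl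
  let S : Set (Subring (k × C)) := {G | G ≤ T ∧ (∀ c, ((0 : k), c) ∈ G → c = 0) ∧
    ∀ z ∈ T, z ^ p ∈ G}
  have hpk : CharP (k × C) p := ⟨fun n => by
    rw [Prod.ext_iff]; simp [CharP.cast_eq_zero_iff k p, CharP.cast_eq_zero_iff C p]⟩
  have h0 : T.map (frobenius (k × C) p) ∈ S := by
    refine ⟨?_, ?_, ?_⟩
    · rintro _ ⟨z, hz, rfl⟩
      exact Subring.pow_mem _ hz p
    · rintro c ⟨z, hz, h⟩
      rw [frobenius_def, Prod.ext_iff] at h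
      obtain ⟨h1, h2⟩ := h
      have h1 : z.1 = 0 := pow_eq_zero_iff hp.out.ne_zero |>.1 h1
      have h3 : z.2 ∈ N := by
        rw [← Ideal.Quotient.eq_zero_iff_mem, ← (hT z).1 hz, h1, map_zero]
      have h4 : z.2 ^ 2 = 0 := by
        have := Ideal.pow_mem_pow h3 2
        rwa [hN] at this
      have h2 : z.2 ^ p = c := h2
      rw [← h2]
      exact pow_eq_zero_of_le hp.out.two_le h4
    · intro z hz
      exact ⟨z, hz, rfl⟩
  obtain ⟨G, -, hG⟩ := zorn_le_nonempty₀ S (by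
    intro c hc hch y hy
    refine ⟨sSup c, ⟨?_, ?_, ?_⟩, fun z hz => le_sSup hz⟩
    · exact sSup_le fun G hG => (hc hG).1
    · intro b hb
      obtain ⟨G, hG, hb⟩ := (Subring.mem_sSup_of_directedOn ⟨y, hy⟩ hch.directedOn).1 hb
      exact (hc hG).2.1 b hb
    · intro z hz
      exact le_sSup hy ((hc hy).2.2 z hz)) _ h0
  obtain ⟨⟨hGT, hG0, hGp⟩, hmax⟩ := hG
  have huniq : ∀ {a : k} {c c' : C}, (a, c) ∈ G → (a, c') ∈ G → c = c' := by
    intro a c c' h h'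
    have := G.sub_mem h h'
    simp only [Prod.mk_sub_mk, sub_self] at this
    exact sub_eq_zero.1 (hG0 _ this)
  have hlift : ∀ a : k, ∃ c, (a, c) ∈ T := fun a => by
    obtain ⟨c, hc⟩ := Ideal.Quotient.mk_surjective (u a)
    exact ⟨c, hc.symm⟩
  let F : Subfield k :=
    { G.map (RingHom.fst k C) with
      inv_mem' := by
        rintro _ ⟨⟨a, c⟩, h, rfl⟩
        change a⁻¹ ∈ G.map (RingHom.fst k C)
        by_cases ha : a = 0
        · rw [ha, inv_zero]; exact zero_mem _
        obtain ⟨b, hb⟩ := hlift a⁻¹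
        refine ⟨(a, c) ^ (p - 1) * (a⁻¹, b) ^ p, G.mul_mem (G.pow_mem h _) (hGp _ hb), ?_⟩
        change a ^ (p - 1) * a⁻¹ ^ p = a⁻¹
        obtain ⟨q, hq⟩ : ∃ q, p = q + 1 := ⟨p - 1, by have := hp.out.pos; omega⟩
        rw [hq, Nat.add_sub_cancel, pow_succ, ← mul_assoc, ← mul_pow, mul_inv_cancel₀ ha, one_pow,
          one_mul] }
  have hF : ∀ a, a ∈ F ↔ ∃ c, (a, c) ∈ G := by
    intro a
    constructor
    · rintro ⟨⟨a, c⟩, h, rfl⟩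
      exact ⟨c, h⟩
    · rintro ⟨c, h⟩
      exact ⟨⟨a, c⟩, h, rfl⟩
  choose v hv using fun a : F => (hF a).1 a.2
  let w : F →+* k × C :=
    { toFun := fun a => (a, v a)
      map_one' := Prod.ext rfl (huniq (hv 1) G.one_mem)
      map_zero' := Prod.ext rfl (huniq (hv 0) G.zero_mem)
      map_mul' := fun a b => Prod.ext rfl (huniq (hv (a * b)) (G.mul_mem (hv a) (hv b)))
      map_add' := fun a b => Prod.ext rfl (huniq (hv (a + b)) (G.add_mem (hv a) (hv b))) }
  have hw : ∀ a, w a ∈ G := hv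
  have htop : ∀ a, a ∈ F := by
    intro a
    by_contra ha
    obtain ⟨c, hc⟩ := hlift a
    have hapG := hGp _ hc
    have hap : a ^ p ∈ F := (hF _).2 ⟨c ^ p, hapG⟩
    let b : F := ⟨a ^ p, hap⟩
    have hirr : Irreducible (X ^ p - Polynomial.C b : F[X]) := by
      refine X_pow_sub_C_irreducible_of_prime hp.out fun y hy => ha ?_
      have h1 : (y : k) ^ p = a ^ p := congrArg Subtype.val hy
      have : (y : k) = a := frobenius_inj k p h1
      exact this ▸ y.2
    let ev : F[X] →+* k × C := eval₂RingHom w (a, c)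
    have hle : G ≤ ev.range := by
      rintro ⟨g, e⟩ hg
      refine ⟨Polynomial.C ⟨g, (hF g).2 ⟨e, hg⟩⟩, ?_⟩
      simp only [ev, coe_eval₂RingHom, eval₂_C]
      exact Prod.ext rfl (huniq (hw _) hg)
    have hS : ev.range ∈ S := by
      refine ⟨?_, ?_, fun z hz => hle (hGp z hz)⟩
      · rintro _ ⟨P, rfl⟩
        have : (u.comp (RingHom.fst k C)).comp ev =
            ((Ideal.Quotient.mk N).comp (RingHom.snd k C)).comp ev := by
          apply Polynomial.ringHom_ext
          · intro a
            simp only [RingHom.comp_apply, ev, coe_eval₂RingHom, eval₂_C]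
            exact hGT (hw a)
          · simp only [RingHom.comp_apply, ev, coe_eval₂RingHom, eval₂_X]
            exact hc
        exact congrArg (fun f => f P) this
      · rintro y ⟨P, hP⟩
        have h1 : aeval a P = 0 := by
          have h2 : (RingHom.fst k C).comp ev = (aeval (R := F) a : F[X] →ₐ[F] k).toRingHom := by
            apply Polynomial.ringHom_ext
            · intro a
              simp [ev, w]
              rfl
            · simp [ev]
          have h3 := congrArg (fun f => f P) h2
          simp only [RingHom.comp_apply, hP] at h3
          exact h3.symm
        have h2 : X ^ p - Polynomial.C b ∣ P := by
          have : X ^ p - Polynomial.C b = minpoly F a :=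
            minpoly.eq_of_irreducible_of_monic hirr (by simp [b]; exact sub_self _)
              (monic_X_pow_sub_C _ hp.out.ne_zero)
          rw [this]
          exact minpoly.dvd F a h1
        obtain ⟨Q, rfl⟩ := h2
        have h3 : ev (X ^ p - Polynomial.C b) = 0 := by
          simp only [ev, coe_eval₂RingHom, eval₂_sub, eval₂_X_pow, eval₂_C]
          rw [sub_eq_zero]
          exact Prod.ext rfl (huniq hapG (hw b))
        rw [map_mul, h3, zero_mul] at hP
        exact (congrArg Prod.snd hP).symm
    refine ha ((hF a).2 ⟨c, hmax hS hle ⟨X, ?_⟩⟩)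
    simp [ev]
  refine ⟨(RingHom.snd k C).comp (w.comp ((RingHom.id k).codRestrict F htop)), ?_⟩
  ext a
  exact (hGT (hw ⟨a, htop a⟩)).symm

/-- Every field of characteristic `p`, perfect or not, is formally smooth over the prime field. -/
lemma formallySmooth_of_charP (k : Type) [Field k] (p : ℕ) [Fact p.Prime] [CharP k p]
    [Algebra (ZMod p) k] : Algebra.FormallySmooth (ZMod p) k := by
  refine .of_comp_surjective fun C _ _ I hI f => ?_
  rcases subsingleton_or_nontrivial C with h | h
  · have : Subsingleton (C ⧸ I) := Ideal.Quotient.mk_surjective.subsingleton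
    exact ⟨{ toFun := fun _ => 0, map_one' := Subsingleton.elim _ _,
             map_zero' := Subsingleton.elim _ _, map_mul' := fun _ _ => Subsingleton.elim _ _,
             map_add' := fun _ _ => Subsingleton.elim _ _,
             commutes' := fun _ => Subsingleton.elim _ _ },
      AlgHom.ext fun _ => Subsingleton.elim _ _⟩
  have : CharP C p := charP_of_injective_algebraMap (algebraMap (ZMod p) C).injective p
  obtain ⟨v, hv⟩ := exists_lift_sq_zero p I hI f.toRingHom
  refine ⟨{ v with commutes' := fun r => ?_ }, ?_⟩
  · exact congrArg (fun g : ZMod p →+* C => g r)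
      (Subsingleton.elim (v.comp (algebraMap (ZMod p) k)) (algebraMap (ZMod p) C))
  · ext a
    exact congrArg (fun g => g a) hv

/-- A complete local ring of characteristic `p` has a coefficient field. -/
lemma exists_coefficient_field (R : Type) [CommRing R] [IsLocalRing R]
    [IsAdicComplete (IsLocalRing.maximalIdeal R) R] (p : ℕ) [Fact p.Prime] [CharP R p] :
    ∃ g : IsLocalRing.ResidueField R →+* R,
      (IsLocalRing.residue R).comp g = RingHom.id _ := by
  let _ : Algebra (ZMod p) R := ZMod.algebra R p
  let _ : Algebra (ZMod p) (R ⧸ IsLocalRing.maximalIdeal R) := inferInstance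
  let _ : Field (R ⧸ IsLocalRing.maximalIdeal R) := Ideal.Quotient.field _
  have : CharP (R ⧸ IsLocalRing.maximalIdeal R) p :=
    charP_of_injective_algebraMap (algebraMap (ZMod p) _).injective p
  have := formallySmooth_of_charP (R ⧸ IsLocalRing.maximalIdeal R) p
  obtain ⟨g, hg⟩ := Algebra.FormallySmooth.exists_mkₐ_comp_eq_of_isAdicComplete
    (R := ZMod p) (I := IsLocalRing.maximalIdeal R)
    (AlgHom.id (ZMod p) (R ⧸ IsLocalRing.maximalIdeal R))
  exact ⟨g.toRingHom, RingHom.ext fun x => congrArg (fun f => f x) hg⟩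

end CoefficientField

/-! ### Noether normalization of complete local rings -/

section Noether

/-- Evaluation of power series over a coefficient field at elements of the maximal ideal of a
complete local ring. -/
lemma exists_powerSeries_eval {R k : Type} [CommRing R] [IsLocalRing R] [Field k]
    [IsAdicComplete (IsLocalRing.maximalIdeal R) R] (s : k →+* R) {d : ℕ} (x : Fin d → R)
    (hx : ∀ i, x i ∈ IsLocalRing.maximalIdeal R) :
    ∃ g : MvPowerSeries (Fin d) k →+* R, (∀ a, g (MvPowerSeries.C a) = s a) ∧
      ∀ i, g (MvPowerSeries.X i) = x i := by
  let _ : WithIdeal R := ⟨IsLocalRing.maximalIdeal R⟩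
  let _ : UniformSpace k := ⊥
  have : DiscreteUniformity k := ⟨rfl⟩
  have hI : IsAdic (IsLocalRing.maximalIdeal R) := rfl
  obtain ⟨_, _⟩ := hI.isAdicComplete_iff.1 inferInstance
  have ha : MvPowerSeries.HasEval x := by
    refine ⟨fun i => ?_, by simp [Filter.cofinite_eq_bot]⟩
    rw [IsTopologicallyNilpotent, hI.hasBasis_nhds_zero.tendsto_right_iff]
    intro n _
    filter_upwards [Filter.eventually_ge_atTop n] with m hm
    exact Ideal.pow_le_pow_right hm (Ideal.pow_mem_pow (hx i) m)
  have hc : Continuous s := continuous_of_discreteTopology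
  refine ⟨MvPowerSeries.eval₂Hom hc ha, fun a => ?_, fun i => ?_⟩
  · rw [MvPowerSeries.coe_eval₂Hom, MvPowerSeries.eval₂_C]
  · rw [MvPowerSeries.coe_eval₂Hom, MvPowerSeries.eval₂_X]

instance isPrecomplete_pi_fin {S : Type} [CommRing S] (I : Ideal S) [IsPrecomplete I S] (n : ℕ) :
    IsPrecomplete I (Fin n → S) := by
  rw [← AdicCompletion.of_surjective_iff]
  intro y
  choose v hv using fun j => AdicCompletion.of_surjective I S (AdicCompletion.piEquivFin I n y j)
  refine ⟨v, (AdicCompletion.piEquivFin I n).injective ?_⟩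
  ext j : 1
  rw [← hv, AdicCompletion.piEquivFin_apply]
  simp [AdicCompletion.pi, AdicCompletion.map_of]

/-- Module-finiteness from finiteness modulo an ideal for which the base is complete. -/
lemma finite_of_finite_quotient {S M : Type} [CommRing S] [AddCommGroup M] [Module S M]
    (I : Ideal S) [IsPrecomplete I S] [IsHausdorff I M]
    (h : Module.Finite S (M ⧸ (I • ⊤ : Submodule S M))) : Module.Finite S M := by
  obtain ⟨n, f, hf⟩ := Module.Finite.exists_fin' S (M ⧸ (I • ⊤ : Submodule S M))
  choose b hb using fun j : Fin n =>
    Submodule.mkQ_surjective (I • ⊤ : Submodule S M) (f (Pi.single j 1))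
  let g : (Fin n → S) →ₗ[S] M := Fintype.linearCombination S b
  have hg : Submodule.mkQ (I • ⊤) ∘ₗ g = f := by
    refine LinearMap.pi_ext' fun j => LinearMap.ext_ring ?_
    simp [g, Fintype.linearCombination_apply_single, ← hb]
  refine Module.Finite.of_surjective g (surjective_of_mkQ_comp_surjective (I := I) ?_)
  rw [hg]; exact hf

/-- Finitely many parameters of a Noetherian local ring of dimension `d`, indexed by `ℕ` with only
the first `d` values of interest. -/
lemma exists_parameters (R : Type) [CommRing R] [IsLocalRing R] [IsNoetherianRing R]
    (d : ℕ) (hd : ringKrullDim R = d) :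
    ∃ x : ℕ → R, (Ideal.span (x '' Set.Iio d)).radical = IsLocalRing.maximalIdeal R := by
  obtain ⟨s, hs, hc⟩ := Ideal.exists_finset_card_eq_height_of_isNoetherianRing
    (IsLocalRing.maximalIdeal R)
  have hcd : s.card = d := by
    have h1 := IsLocalRing.maximalIdeal_height_eq_ringKrullDim (R := R)
    rw [hd, ← hc] at h1
    exact_mod_cast h1
  let e := s.equivFin
  refine ⟨fun i => if h : i < s.card then (e.symm ⟨i, h⟩ : R) else 0, ?_⟩
  have himg : (fun i => if h : i < s.card then (e.symm ⟨i, h⟩ : R) else 0) '' Set.Iio d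
      = (s : Set R) := by
    ext y
    constructor
    · rintro ⟨i, hi, rfl⟩
      have hi : i < s.card := hcd ▸ hi
      simp only [hi, dif_pos]
      exact (e.symm ⟨i, hi⟩).2
    · intro hy
      refine ⟨e ⟨y, hy⟩, ?_, ?_⟩
      · rw [← hcd]; exact (e ⟨y, hy⟩).2
      · simp
  rw [himg]
  refine le_antisymm ?_ ?_
  · exact (Ideal.IsPrime.radical_le_iff inferInstance).2 hs.1.2
  · rw [Ideal.radical_eq_sInf]
    refine le_sInf fun J hJ => ?_
    exact hs.2 ⟨hJ.2, hJ.1⟩ (IsLocalRing.le_maximalIdeal hJ.2.ne_top)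

/-- Modulo any power of the maximal ideal, a Noetherian local ring is finite over a ring mapping
onto its residue field. -/
lemma exists_fg_sup_pow {S R : Type} [CommRing S] [CommRing R] [IsLocalRing R]
    [IsNoetherianRing R] [Algebra S R]
    (h : ∀ r : R, ∃ c : S, r - algebraMap S R c ∈ IsLocalRing.maximalIdeal R) (n : ℕ) :
    ∃ W : Submodule S R, W.FG ∧
      W ⊔ (IsLocalRing.maximalIdeal R ^ n).restrictScalars S = ⊤ := by
  induction n with
  | zero => exact ⟨⊥, Submodule.fg_bot, by simp⟩
  | succ n ih =>
    obtain ⟨W, hW, hWt⟩ := ih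
    obtain ⟨Y, hY⟩ := (IsNoetherian.noetherian (IsLocalRing.maximalIdeal R ^ n) :
      (IsLocalRing.maximalIdeal R ^ n).FG)
    refine ⟨W ⊔ Submodule.span S (Y : Set R), hW.sup ⟨Y, rfl⟩, ?_⟩
    rw [eq_top_iff, ← hWt, sup_assoc]
    refine sup_le_sup_left ?_ _
    intro z hz
    replace hz : z ∈ Submodule.span R (Y : Set R) := hY ▸ hz
    induction hz using Submodule.span_induction with
    | mem z hz => exact Submodule.mem_sup_left (Submodule.subset_span hz)
    | zero => exact zero_mem _
    | add a b _ _ ha hb => exact add_mem ha hb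
    | smul r z hz ih =>
      obtain ⟨c, hc⟩ := h r
      have h1 : r • z = c • z + (r - algebraMap S R c) * z := by
        rw [Algebra.smul_def c, smul_eq_mul]; ring
      rw [h1]
      refine add_mem (Submodule.smul_mem _ c ih) (Submodule.mem_sup_right ?_)
      change _ ∈ IsLocalRing.maximalIdeal R ^ (n + 1)
      rw [pow_succ']
      exact Ideal.mul_mem_mul hc (hY ▸ hz)

lemma ringKrullDim_le_of_isIntegral {S R : Type} [CommRing S] [CommRing R] [Algebra S R]
    [Algebra.IsIntegral S R] : ringKrullDim R ≤ ringKrullDim S :=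
  Order.krullDim_le_of_strictMono (PrimeSpectrum.comap (algebraMap S R))
    fun I _ h => Ideal.IsIntegral.comap_lt_comap (I := I.asIdeal) h

open MvPowerSeries in
/-- The ideal generated by the `X_i ^ N_i`, for `i` in a finite set `s`, contains all series without
terms of exponents less than `N_i` for all `i ∈ s`. -/
lemma mem_span_X_pow_of_coeff_eq_zero {k σ : Type} [Field k] (N : σ → ℕ) (s : Finset σ)
    (f : MvPowerSeries σ k) (h : ∀ a : σ →₀ ℕ, (∀ i ∈ s, a i < N i) → coeff a f = 0) :
    f ∈ Ideal.span ((fun i => (X i : MvPowerSeries σ k) ^ N i) '' s) := by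
  classical
  induction s using Finset.induction_on generalizing f with
  | empty =>
    have : f = 0 := by ext a; exact h a (by simp)
    rw [this]; exact zero_mem _
  | insert i s _ ih =>
    let f' : MvPowerSeries σ k := fun a => if a i < N i then coeff a f else 0
    have hf' : ∀ a, coeff a f' = if a i < N i then coeff a f else 0 := fun a => rfl
    have h1 : (X i : MvPowerSeries σ k) ^ N i ∣ f - f' := by
      rw [X_pow_dvd_iff]
      intro a ha
      rw [map_sub, hf', if_pos ha, sub_self]
    have h2 := ih f' fun a ha => by
      rw [hf']
      split_ifs with hi
      · exact h a (by simpa [hi] using ha)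
      · rfl
    rw [← sub_add_cancel f f']
    refine add_mem (Ideal.mem_of_dvd _ h1 (Ideal.subset_span ⟨i, by simp, rfl⟩)) ?_
    exact Ideal.span_mono (Set.image_mono (by simp)) h2

lemma ringKrullDim_mvPowerSeries_le (k : Type) [Field k] (d : ℕ) :
    ringKrullDim (MvPowerSeries (Fin d) k) ≤ d := by
  have hm : IsLocalRing.maximalIdeal (MvPowerSeries (Fin d) k) =
      Ideal.span (Set.range MvPowerSeries.X) := by
    refine le_antisymm (fun f hf => ?_) (Ideal.span_le.2 ?_)
    · have := mem_span_X_pow_of_coeff_eq_zero (fun _ => 1) Finset.univ f fun a ha => by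
        have : a = 0 := by ext i; exact Nat.lt_one_iff.1 (ha i (Finset.mem_univ i))
        rw [IsLocalRing.mem_maximalIdeal, mem_nonunits_iff,
          MvPowerSeries.isUnit_iff_constantCoeff, isUnit_iff_ne_zero, not_not] at hf
        rw [this]; exact hf
      simpa using this
    · rintro _ ⟨i, rfl⟩
      simp [MvPowerSeries.isUnit_iff_constantCoeff]
  refine (ringKrullDim_le_spanFinrank_maximalIdeal _).trans ?_
  rw [hm]
  have h1 := Submodule.spanFinrank_span_le_ncard_of_finite
    (R := MvPowerSeries (Fin d) k)
    (Set.finite_range (MvPowerSeries.X : Fin d → MvPowerSeries (Fin d) k))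
  have h2 : (Set.range (MvPowerSeries.X : Fin d → MvPowerSeries (Fin d) k)).ncard ≤ d := by
    rw [← Set.image_univ]
    exact (Set.ncard_image_le Set.finite_univ).trans (by simp)
  exact_mod_cast h1.trans h2

/-- Cohen's structure theorem in equal characteristic: a complete Noetherian local ring of
dimension `d` is a finite extension of a power series ring in `d` parameters. -/
theorem exists_noether_normalization (R : Type) [CommRing R] [IsLocalRing R] [IsNoetherianRing R]
    [IsAdicComplete (IsLocalRing.maximalIdeal R) R] (p : ℕ) [Fact p.Prime] [CharP R p]
    (d : ℕ) (hd : ringKrullDim R = d) :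
    ∃ (x : ℕ → R) (g : MvPowerSeries (Fin d) (IsLocalRing.ResidueField R) →+* R),
      (Ideal.span (x '' Set.Iio d)).radical = IsLocalRing.maximalIdeal R ∧
      (∀ i : Fin d, g (MvPowerSeries.X i) = x i) ∧ g.Finite ∧ Function.Injective g := by
  obtain ⟨x, hx⟩ := exists_parameters R d hd
  obtain ⟨s, hs⟩ := exists_coefficient_field R p
  have hxm : ∀ i : Fin d, x i ∈ IsLocalRing.maximalIdeal R := fun i => by
    rw [← hx]; exact Ideal.le_radical (Ideal.subset_span ⟨i, i.2, rfl⟩)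
  obtain ⟨g, hgC, hgX⟩ := exists_powerSeries_eval s (fun i : Fin d => x i) hxm
  let _ : Algebra (MvPowerSeries (Fin d) (IsLocalRing.ResidueField R)) R := g.toAlgebra
  let I : Ideal (MvPowerSeries (Fin d) (IsLocalRing.ResidueField R)) :=
    Ideal.span (Set.range MvPowerSeries.X)
  have hI : I.map (algebraMap _ R) = Ideal.span (x '' Set.Iio d) := by
    rw [Ideal.map_span]
    congr 1
    ext y
    constructor
    · rintro ⟨_, ⟨i, rfl⟩, rfl⟩
      exact ⟨i, i.2, (hgX i).symm⟩
    · rintro ⟨i, hi, rfl⟩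
      exact ⟨_, ⟨⟨i, hi⟩, rfl⟩, hgX ⟨i, hi⟩⟩
  have hhaus : IsHausdorff I R := by
    rw [← IsHausdorff.map_algebraMap_iff (S := R), hI]
    refine IsHausdorff.of_isLocalRing _ _ fun h => ?_
    rw [h, Ideal.radical_top] at hx
    exact (IsLocalRing.maximalIdeal.isMaximal R).ne_top hx.symm
  have hfin : Module.Finite (MvPowerSeries (Fin d) (IsLocalRing.ResidueField R)) R := by
    refine finite_of_finite_quotient I ?_
    obtain ⟨N, hN⟩ := Ideal.exists_pow_le_of_le_radical_of_fg hx.ge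
      (IsNoetherian.noetherian (IsLocalRing.maximalIdeal R))
    obtain ⟨W, hW, hWt⟩ := exists_fg_sup_pow
      (S := MvPowerSeries (Fin d) (IsLocalRing.ResidueField R)) (R := R) (fun r => by
        refine ⟨MvPowerSeries.C (IsLocalRing.residue R r), ?_⟩
        rw [← IsLocalRing.ker_residue, RingHom.mem_ker, map_sub, sub_eq_zero]
        exact ((congrArg (IsLocalRing.residue R) (hgC _)).trans
          (congrArg (fun f => f (IsLocalRing.residue R r)) hs)).symm) N
    refine ⟨?_⟩
    have : (⊤ : Submodule _ (R ⧸ (I • ⊤ : Submodule _ R))) =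
        W.map (Submodule.mkQ (I • ⊤ : Submodule _ R)) := by
      refine (eq_top_iff.2 fun z' _ => ?_).symm
      obtain ⟨z, rfl⟩ := Submodule.mkQ_surjective _ z'
      obtain ⟨w, hw, v, hv, rfl⟩ := Submodule.mem_sup.1 (hWt ▸ Submodule.mem_top (x := z))
      refine ⟨w, hw, (Submodule.Quotient.eq _).2 ?_⟩
      rw [Ideal.smul_top_eq_map, hI, sub_add_cancel_left]
      exact neg_mem (hN hv)
    rw [this]
    exact hW.map _
  refine ⟨x, g, hx, hgX, hfin, ?_⟩
  rw [injective_iff_map_eq_zero]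
  intro r hr
  by_contra hr0
  -- a nonzero kernel would make `R`, of dimension `d`, integral over a ring of smaller dimension
  have h1 := ringKrullDim_quotient_succ_le_of_nonZeroDivisor (mem_nonZeroDivisors_of_ne_zero hr0)
  let g' : _ ⧸ Ideal.span {r} →+* R := Ideal.Quotient.lift (Ideal.span {r}) g (fun a ha => by
    obtain ⟨b, rfl⟩ := Ideal.mem_span_singleton'.1 ha
    rw [map_mul, hr, mul_zero])
  let _ : Algebra (MvPowerSeries (Fin d) (IsLocalRing.ResidueField R) ⧸ Ideal.span {r}) R :=
    g'.toAlgebra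
  have : Algebra.IsIntegral
      (MvPowerSeries (Fin d) (IsLocalRing.ResidueField R) ⧸ Ideal.span {r}) R := by
    refine algebraMap_isIntegral_iff.1 ?_
    change g'.IsIntegral
    refine RingHom.IsIntegral.tower_top (Ideal.Quotient.mk (Ideal.span {r})) g' ?_
    have hg : g'.comp (Ideal.Quotient.mk (Ideal.span {r})) = g := RingHom.ext fun _ => rfl
    rw [hg]
    exact RingHom.Finite.to_isIntegral hfin
  have h2 := ringKrullDim_le_of_isIntegral
    (S := MvPowerSeries (Fin d) (IsLocalRing.ResidueField R) ⧸ Ideal.span {r}) (R := R)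
  have h3 := ringKrullDim_mvPowerSeries_le (IsLocalRing.ResidueField R) d
  rw [hd] at h2
  have h4 : (d : WithBot ℕ∞) + 1 ≤ d := (add_le_add_left h2 1).trans (h1.trans h3)
  have h5 : d + 1 ≤ d := by exact_mod_cast h4
  omega

end Noether

/-! ### Linear functionals over domains -/

section Duals

/-- Linear functionals separate the points of a finitely generated torsion-free module over a
domain: extend scalars to the fraction field and clear denominators. -/
lemma exists_functional_ne_zero {D M : Type} [CommRing D] [IsDomain D] [AddCommGroup M]
    [Module D M] [Module.Finite D M] (hT : ∀ (a : D) (m : M), a • m = 0 → a = 0 ∨ m = 0)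
    (w : M) (hw : w ≠ 0) : ∃ h : M →ₗ[D] D, h w ≠ 0 := by
  let K := FractionRing D
  let V := LocalizedModule (nonZeroDivisors D) M
  let ι : M →ₗ[D] V := LocalizedModule.mkLinearMap (nonZeroDivisors D) M
  let _ : Module K V := inferInstanceAs
    (Module (Localization (nonZeroDivisors D)) (LocalizedModule (nonZeroDivisors D) M))
  have : IsScalarTower D K V := inferInstanceAs (IsScalarTower D
    (Localization (nonZeroDivisors D)) (LocalizedModule (nonZeroDivisors D) M))
  have hι : ι w ≠ 0 := by
    intro h
    obtain ⟨c, hc⟩ := (IsLocalizedModule.eq_zero_iff (nonZeroDivisors D) ι).1 h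
    rcases hT _ _ hc with h | h
    · exact nonZeroDivisors.coe_ne_zero c h
    · exact hw h
  obtain ⟨ℓ, hℓ⟩ : ∃ ℓ : Module.Dual K V, ℓ (ι w) ≠ 0 := by
    by_contra! H
    exact hι ((Module.forall_dual_apply_eq_zero_iff K _).1 H)
  let φ : M →ₗ[D] K := (ℓ.restrictScalars D) ∘ₗ ι
  obtain ⟨Y, hY⟩ := Module.finite_def.1 (inferInstance : Module.Finite D M)
  obtain ⟨b, hb⟩ := IsLocalization.exist_integer_multiples (nonZeroDivisors D) Y φ
  let N : Submodule D K := LinearMap.range (Algebra.linearMap D K)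
  have hN : ∀ m, (b : D) • φ m ∈ N := by
    intro m
    have hm : m ∈ Submodule.span D (Y : Set M) := hY ▸ Submodule.mem_top
    induction hm using Submodule.span_induction with
    | mem y hy =>
      obtain ⟨r, hr⟩ := hb y hy
      exact ⟨r, hr⟩
    | zero => simp
    | add u v _ _ hu hv => rw [map_add, smul_add]; exact add_mem hu hv
    | smul r v _ hv => rw [map_smul, smul_comm]; exact N.smul_mem r hv
  have hinj : Function.Injective (Algebra.linearMap D K) := IsFractionRing.injective D K
  let e := LinearEquiv.ofInjective (Algebra.linearMap D K) hinj
  refine ⟨e.symm.toLinearMap ∘ₗ ((b : D) • φ).codRestrict N hN, fun h => hℓ ?_⟩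
  have h1 : ((b : D) • φ).codRestrict N hN w = 0 := by
    simpa using h
  have h2 : (b : D) • φ w = 0 := congrArg Subtype.val h1
  rcases smul_eq_zero.1 h2 with h | h
  · exact absurd h (nonZeroDivisors.coe_ne_zero b)
  · exact h

/-- From an `S`-linear functional on an `R`-module to an `R`-linear one, for a finite extension
`S ⊆ R` of domains: the quotient by the largest `R`-submodule killed by the functional is finitely
generated and torsion-free over `R`. -/
lemma exists_functional_of_finite_extension {S R A : Type} [CommRing S] [IsDomain S]
    [IsNoetherianRing S] [CommRing R] [IsDomain R] [Algebra S R] [Module.Finite S R]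
    [AddCommGroup A] [Module R A] [Module S A] [IsScalarTower S R A]
    (φ : A →ₗ[S] S) (a₀ : A) (h₀ : φ a₀ ≠ 0) : ∃ ψ : A →ₗ[R] R, ψ a₀ ≠ 0 := by
  let K : Submodule R A :=
    { carrier := {a | ∀ r : R, φ (r • a) = 0}
      add_mem' := fun ha hb r => by rw [smul_add, map_add, ha r, hb r, add_zero]
      zero_mem' := fun r => by simp
      smul_mem' := fun c a ha r => by rw [smul_smul]; exact ha _ }
  have hK : ∀ a, a ∈ K ↔ ∀ r : R, φ (r • a) = 0 := fun a => Iff.rfl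
  obtain ⟨n, u, hu⟩ := Module.Finite.exists_fin' S R
  let ev : A →ₗ[S] (Fin n → S) := LinearMap.pi fun j =>
    φ ∘ₗ ((LinearMap.lsmul R A (u (Pi.single j 1))).restrictScalars S)
  have hev : ∀ a, ev a = 0 → a ∈ K := by
    intro a ha
    rw [hK]
    let T : R →ₗ[S] S := φ ∘ₗ ((LinearMap.toSpanSingleton R A a).restrictScalars S)
    have hT : T ∘ₗ u = 0 := by
      refine LinearMap.pi_ext' fun j => LinearMap.ext_ring ?_
      exact congrFun ha j
    intro r
    obtain ⟨v, rfl⟩ := hu r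
    exact congrArg (fun f => f v) hT
  have hfinS : Module.Finite S (A ⧸ K.restrictScalars S) := by
    have hker : LinearMap.ker ev = K.restrictScalars S := by
      refine le_antisymm (fun a ha => hev a ha) fun a ha => ?_
      exact funext fun j => (hK a).1 ha _
    rw [← hker]
    exact Module.Finite.equiv ev.quotKerEquivRange.symm
  have hfin : Module.Finite R (A ⧸ K) := by
    have : Module.Finite S (A ⧸ K) := hfinS
    exact Module.Finite.of_restrictScalars_finite S R (A ⧸ K)
  obtain ⟨h, hh⟩ := exists_functional_ne_zero (D := R) (M := A ⧸ K) (by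
    intro r m hm
    obtain ⟨a, rfl⟩ := Submodule.mkQ_surjective K m
    by_contra! hne
    refine hne.2 ((Submodule.Quotient.mk_eq_zero _).2 ?_)
    rw [← map_smul] at hm
    have hm : r • a ∈ K := (Submodule.Quotient.mk_eq_zero _).1 hm
    obtain ⟨s, hs0, r', hs⟩ := ((Algebra.IsIntegral.isIntegral (R := S) r).isAlgebraic).exists_nonzero_dvd
      (mem_nonZeroDivisors_of_ne_zero hne.1)
    rw [hK] at hm ⊢
    intro t
    have := hm (t * r')
    rw [smul_smul, mul_assoc, mul_comm r' r, ← hs, mul_comm, ← smul_smul, algebraMap_smul,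
      map_smul] at this
    exact (smul_eq_zero.1 this).resolve_left hs0) (K.mkQ a₀) (by
    intro h
    refine h₀ ?_
    simpa using (hK a₀).1 ((Submodule.Quotient.mk_eq_zero _).1 h) 1)
  exact ⟨h ∘ₗ K.mkQ, hh⟩

end Duals

/-! ### Functionals from nonzero cohomology classes -/

section Functional

/-- A vector outside an `S`-submodule is separated from it by a functional that is linear over a
field mapping to `S`. -/
lemma exists_additive_functional {k S H : Type} [Field k] [CommRing S] (C : k →+* S)
    [AddCommGroup H] [Module S H] (Q : Submodule S H) (y : H) (hy : y ∉ Q) :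
    ∃ l : H →+ k, (∀ c v, l (C c • v) = c * l v) ∧ (∀ q ∈ Q, l q = 0) ∧ l y ≠ 0 := by
  let _ : Module k (H ⧸ Q) := Module.compHom (H ⧸ Q) C
  obtain ⟨ℓ, hℓ⟩ : ∃ ℓ : Module.Dual k (H ⧸ Q), ℓ (Q.mkQ y) ≠ 0 := by
    by_contra! h
    exact hy ((Submodule.Quotient.mk_eq_zero _).1 ((Module.forall_dual_apply_eq_zero_iff k _).1 h))
  refine ⟨ℓ.toAddMonoidHom.comp Q.mkQ.toAddMonoidHom, fun c v => ?_, fun q hq => ?_, hℓ⟩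
  · exact ℓ.map_smul c (Q.mkQ v)
  · have : Q.mkQ q = 0 := (Submodule.Quotient.mk_eq_zero _).2 hq
    change ℓ (Q.mkQ q) = 0
    rw [this, map_zero]

open MvPowerSeries in
/-- A nonzero class `[z; X ^ (t + 1)]` in the top Čech cohomology of a module `M` over
`S = k⟦X_1, …, X_d⟧` gives a nonzero `S`-linear functional on `M`. If `l` is a `k`-linear functional
on that cohomology not vanishing on the class, then `m ↦ ∑ l ([m; X ^ (a + 1)]) X ^ a` is one. The
cohomology is realised as the quotient of the localization of `M` at `X_1 ⋯ X_d` by the submodule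
`Q` below. -/
lemma exists_functional_of_cech_ne_zero {k M : Type} [Field k] {d : ℕ} [AddCommGroup M]
    [Module (MvPowerSeries (Fin d) k) M] (t : ℕ) (z : M)
    (hz : ∀ s, (∏ i, (X i : MvPowerSeries (Fin d) k)) ^ s • z ∉
      (Ideal.span (Set.range fun i => (X i : MvPowerSeries (Fin d) k) ^ (s + (t + 1))) • ⊤ :
        Submodule (MvPowerSeries (Fin d) k) M)) :
    ∃ φ : M →ₗ[MvPowerSeries (Fin d) k] MvPowerSeries (Fin d) k, φ z ≠ 0 := by
  set S := MvPowerSeries (Fin d) k with hS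
  set π : S := ∏ i, X i with hπ
  let J : ℕ → Submodule S M := fun n => Ideal.span (Set.range fun i => (X i : S) ^ n) • ⊤
  have hJ : ∀ n i (m : M), (X i : S) ^ n • m ∈ J n := fun n i m =>
    Submodule.smul_mem_smul (Ideal.subset_span ⟨i, rfl⟩) Submodule.mem_top
  have hJπ : ∀ n n' (m : M), m ∈ J n → π ^ n' • m ∈ J (n + n') := by
    intro n n' m hm
    refine Submodule.smul_induction_on hm (fun r hr m _ => ?_) fun a b ha hb => ?_
    · rw [smul_smul, mul_comm, ← smul_smul]
      induction hr using Submodule.span_induction with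
      | mem r hr =>
        obtain ⟨i, rfl⟩ := hr
        obtain ⟨c, hc⟩ := Finset.dvd_prod_of_mem (fun i => (X i : S)) (Finset.mem_univ i)
        have : (X i : S) ^ n • π ^ n' • m = (X i : S) ^ (n + n') • c ^ n' • m := by
          rw [hπ, hc, smul_smul, smul_smul]
          congr 1; ring
        change (X i : S) ^ n • π ^ n' • m ∈ _
        rw [this]
        exact hJ _ _ _
      | zero => simp
      | add a b _ _ ha hb =>
        rw [add_smul]; exact add_mem ha hb
      | smul a b _ hb =>
        rw [smul_assoc]; exact Submodule.smul_mem _ _ hb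
    · rw [smul_add]; exact add_mem ha hb
  let B := Localization (Submonoid.powers π)
  let H := LocalizedModule (Submonoid.powers π) M
  let ι : M →ₗ[S] H := LocalizedModule.mkLinearMap (Submonoid.powers π) M
  have hι : ∀ m m', ι m = ι m' → ∃ n, π ^ n • m = π ^ n • m' := by
    intro m m' h
    obtain ⟨⟨_, n, rfl⟩, hc⟩ := (IsLocalizedModule.eq_iff_exists (Submonoid.powers π) ι).1 h
    exact ⟨n, hc⟩
  let Q : Submodule S H :=
    { carrier := {y | ∃ n, ∃ m ∈ J n, π ^ n • y = ι m}
      zero_mem' := ⟨0, 0, zero_mem _, by simp⟩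
      add_mem' := by
        rintro y y' ⟨n, m, hm, h⟩ ⟨n', m', hm', h'⟩
        refine ⟨n + n', π ^ n' • m + π ^ n • m', add_mem (hJπ _ _ _ hm) ?_, ?_⟩
        · rw [add_comm]; exact hJπ _ _ _ hm'
        · rw [map_add, map_smul, map_smul, ← h, ← h', smul_smul, smul_smul, smul_add, pow_add,
            mul_comm (π ^ n')]
      smul_mem' := by
        rintro c y ⟨n, m, hm, h⟩
        exact ⟨n, c • m, Submodule.smul_mem _ _ hm, by rw [smul_comm, h, map_smul]⟩ }
  have hu : ∀ i, ∃ u : B, algebraMap S B (X i) * u = 1 := by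
    intro i
    have h1 : IsUnit (algebraMap S B π) :=
      IsLocalization.map_units B (⟨π, 1, pow_one π⟩ : Submonoid.powers π)
    have h2 : IsUnit (algebraMap S B (X i)) :=
      isUnit_of_dvd_unit (map_dvd _ (Finset.dvd_prod_of_mem _ (Finset.mem_univ i))) h1
    exact h2.exists_right_inv
  choose u hu using hu
  let W : (Fin d →₀ ℕ) → B := fun a => ∏ i, u i ^ (a i + 1)
  have hWmul : ∀ (a : Fin d →₀ ℕ) (b : Fin d → ℕ),
      W a * algebraMap S B (∏ i, X i ^ (a i + 1 + b i)) = algebraMap S B (∏ i, X i ^ b i) := by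
    intro a b
    simp only [W, map_prod, ← Finset.prod_mul_distrib]
    refine Finset.prod_congr rfl fun i _ => ?_
    rw [pow_add (X i) (a i + 1), map_mul, ← mul_assoc, map_pow, ← mul_pow, mul_comm (u i), hu, one_pow, one_mul]
  -- `W a • ι m` is the fraction `m / X ^ (a + 1)`; it lies in `Q` when some `X i` cancels
  have hWQ : ∀ a i m, W a • ι ((X i : S) ^ (a i + 1) • m) ∈ Q := by
    intro a i m
    obtain ⟨b, hb⟩ : ∃ b : Fin d → ℕ, ∀ j, a j + 1 + b j = (∑ l, a l) + 1 :=
      ⟨fun j => (∑ l, a l) - a j, fun j => by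
        have := Finset.single_le_sum (f := fun l => a l) (fun _ _ => Nat.zero_le _)
          (Finset.mem_univ j)
        change a j + 1 + ((∑ l, a l) - a j) = _
        omega⟩
    refine ⟨(∑ l, a l) + 1, (∏ j, (X j : S) ^ b j) • (X i : S) ^ (a i + 1) • m, ?_, ?_⟩
    · obtain ⟨c, hc⟩ := Finset.dvd_prod_of_mem (fun j => (X j : S) ^ b j) (Finset.mem_univ i)
      have : (∏ j, (X j : S) ^ b j) • (X i : S) ^ (a i + 1) • m =
          (X i : S) ^ ((∑ l, a l) + 1) • c • m := by
        rw [hc, ← hb i, smul_smul, smul_smul]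
        congr 1; ring
      rw [this]
      exact hJ _ _ _
    · have h1 : π ^ ((∑ l, a l) + 1) = ∏ j, (X j : S) ^ (a j + 1 + b j) := by
        rw [hπ, ← Finset.prod_pow]
        exact Finset.prod_congr rfl fun j _ => by rw [hb]
      rw [map_smul ι (∏ j, (X j : S) ^ b j), h1, ← algebraMap_smul B, smul_smul, mul_comm, hWmul,
        algebraMap_smul]
  have hWX : ∀ (c : Fin d →₀ ℕ) i m, W (c + Finsupp.single i 1) • ι ((X i : S) • m) =
      W c • ι m := by
    intro c i m
    have h1 : W (c + Finsupp.single i 1) = W c * u i := by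
      simp only [W]
      rw [← Finset.prod_erase_mul _ _ (Finset.mem_univ i),
        ← Finset.prod_erase_mul (Finset.univ) (fun j => u j ^ (c j + 1)) (Finset.mem_univ i),
        mul_assoc]
      congr 1
      · refine Finset.prod_congr rfl fun j hj => ?_
        simp [(Finset.ne_of_mem_erase hj).symm]
      · simp [pow_succ]
    rw [h1, map_smul, ← algebraMap_smul B (X i : S), smul_smul, mul_assoc, mul_comm (u i), hu, mul_one]
  let τ : Fin d →₀ ℕ := Finsupp.equivFunOnFinite.symm fun _ => t
  have hy : W τ • ι z ∉ Q := by
    rintro ⟨n, m, hm, h⟩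
    have h1 : π ^ n • ι z = π ^ (t + 1) • ι m := by
      rw [← h, smul_comm]
      congr 1
      have h2 := hWmul τ 0
      simp only [τ, Finsupp.equivFunOnFinite_symm_apply_apply, Pi.zero_apply, add_zero, pow_zero,
        Finset.prod_const_one, map_one, Finset.prod_pow] at h2
      rw [← algebraMap_smul B (π ^ (t + 1)), smul_smul, mul_comm, h2, one_smul]
    rw [← map_smul, ← map_smul] at h1
    obtain ⟨v, hv⟩ := hι _ _ h1
    refine hz (v + n) ?_
    rw [pow_add, ← smul_smul, hv, smul_smul, ← pow_add]
    have := hJπ n (v + (t + 1)) m hm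
    rwa [show n + (v + (t + 1)) = v + n + (t + 1) by ring] at this
  obtain ⟨l, hlC, hlQ, hly⟩ := exists_additive_functional (C : k →+* S) Q _ hy
  let φ : M →+ S :=
    { toFun := fun m a => l (W a • ι m)
      map_zero' := by
        funext a
        change l (W a • ι 0) = 0
        rw [map_zero, smul_zero, map_zero]
      map_add' := fun m m' => by
        funext a
        change l (W a • ι (m + m')) = l (W a • ι m) + l (W a • ι m')
        rw [map_add, smul_add, map_add] }
  have hφ : ∀ m a, coeff a (φ m) = l (W a • ι m) := fun m a => rfl
  have hφC : ∀ c m, φ ((C c : S) • m) = (C c : S) * φ m := by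
    intro c m
    ext a
    rw [hφ, map_smul ι, smul_comm, hlC, coeff_C_mul, hφ]
  have hφX : ∀ i m, φ ((X i : S) • m) = (X i : S) * φ m := by
    intro i m
    ext a
    by_cases ha : a i = 0
    · have h1 := hlQ _ (hWQ a i m)
      rw [ha, zero_add, pow_one] at h1
      rw [hφ, h1]
      exact (X_dvd_iff.1 (Dvd.intro _ rfl) a ha).symm
    · obtain ⟨c, rfl⟩ : ∃ c : Fin d →₀ ℕ, a = c + Finsupp.single i 1 :=
        ⟨a - Finsupp.single i 1, (tsub_add_cancel_of_le (by
          rw [Finsupp.single_le_iff]; omega)).symm⟩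
      rw [hφ, hWX, X, add_comm c, coeff_add_monomial_mul, one_mul, hφ]
  have hφp : ∀ (P : MvPolynomial (Fin d) k) m, φ ((P : S) • m) = (P : S) * φ m := by
    intro P
    induction P using MvPolynomial.induction_on with
    | C c => intro m; rw [MvPolynomial.coe_C]; exact hφC c m
    | add P P' h h' =>
      intro m
      rw [MvPolynomial.coe_add, add_smul, map_add, h, h', add_mul]
    | mul_X P i h =>
      intro m
      rw [MvPolynomial.coe_mul, MvPolynomial.coe_X, ← smul_smul, h, hφX, mul_assoc]
  have hφs : ∀ (f : S) m, φ (f • m) = f * φ m := by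
    intro f m
    ext a
    -- only the truncation of `f` at `a` contributes to the coefficient of `X ^ a`
    have h1 : f - ((trunc' k a f : MvPolynomial (Fin d) k) : S) ∈
        Ideal.span ((fun i => (X i : S) ^ (a i + 1)) '' (Finset.univ : Finset (Fin d))) := by
      refine mem_span_X_pow_of_coeff_eq_zero (fun i => a i + 1) _ _ fun b hb => ?_
      have hb : b ≤ a := fun i => Nat.lt_succ_iff.1 (hb i (Finset.mem_univ i))
      rw [map_sub, MvPolynomial.coeff_coe, coeff_trunc', if_pos hb, sub_self]
    have h2 : ∀ r ∈ Ideal.span ((fun i => (X i : S) ^ (a i + 1)) '' (Finset.univ : Finset (Fin d))),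
        (∀ m, coeff a (φ (r • m)) = 0) ∧ ∀ v : S, coeff a (r * v) = 0 := by
      intro r hr
      induction hr using Submodule.span_induction with
      | mem r hr =>
        obtain ⟨i, -, rfl⟩ := hr
        exact ⟨fun m => by rw [hφ, hlQ _ (hWQ a i m)],
          fun v => X_pow_dvd_iff.1 (Dvd.intro _ rfl) a (Nat.lt_succ_self _)⟩
      | zero => simp
      | add r r' _ _ h h' =>
        exact ⟨fun m => by rw [add_smul, map_add, map_add, h.1, h'.1, add_zero],
          fun v => by rw [add_mul, map_add, h.2, h'.2, add_zero]⟩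
      | smul c r hr h =>
        refine ⟨fun m => ?_, fun v => ?_⟩
        · rw [smul_assoc, smul_comm]; exact h.1 _
        · rw [smul_eq_mul, mul_assoc, mul_left_comm]; exact h.2 _
    rw [← sub_add_cancel f ((trunc' k a f : MvPolynomial (Fin d) k) : S), add_smul, map_add,
      map_add, (h2 _ h1).1, hφp, add_mul, map_add, (h2 _ h1).2]
  refine ⟨{ φ with map_smul' := hφs }, fun h => hly ?_⟩
  rw [← hφ]
  exact (congrArg (coeff τ) h).trans (map_zero _)

end Functional

/-! ### Tight closure and the forcing algebra -/

section Main
open MvPolynomial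

/-- Frobenius carries an ideal into the ideal generated by the powers of given generators. -/
lemma pow_mem_span_pow {R : Type} [CommRing R] (p : ℕ) [Fact p.Prime] [CharP R p] (e : ℕ)
    {s : Set R} {r : R} (hr : r ∈ Ideal.span s) :
    r ^ p ^ e ∈ Ideal.span ((fun a => a ^ p ^ e) '' s) := by
  have h := Ideal.mem_map_of_mem (iterateFrobenius R p e) hr
  rw [Ideal.map_span] at h
  have he : ⇑(iterateFrobenius R p e) = fun a => a ^ p ^ e := funext fun a =>
    iterateFrobenius_def p e a
  rwa [he] at h

lemma exists_sum_of_mem_bracketPow {R : Type} [CommRing R] (p : ℕ) [Fact p.Prime] [CharP R p]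
    (e : ℕ) {n : ℕ} (f : Fin n → R) {r : R}
    (hr : r ∈ bracketPow (Ideal.span (Set.range f)) (p ^ e)) :
    ∃ v : Fin n → R, ∑ i, v i * f i ^ p ^ e = r := by
  have h : bracketPow (Ideal.span (Set.range f)) (p ^ e) ≤
      Ideal.span (Set.range fun i => f i ^ p ^ e) := by
    refine Ideal.span_le.2 ?_
    rintro _ ⟨a, ha, rfl⟩
    have := pow_mem_span_pow p e ha
    rwa [← Set.range_comp] at this
  exact Ideal.mem_span_range_iff_exists_fun.1 (h hr)

lemma forcingAlgebra_smul_def {R : Type} [CommRing R] {n : ℕ} (f : Fin n → R) (f0 r : R)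
    (a : forcingAlgebra R n f f0) : r • a = algebraMap R (forcingAlgebra R n f f0) r * a :=
  Algebra.smul_def r a

/-- If `c f_0 ^ q = ∑ f_i ^ q v_i` with `c ≠ 0`, then the `e`-th iterate of the Frobenius of `R`
extends to a homomorphism from the forcing algebra to the fraction field of `R`, sending `T_i` to
`- v_i / c`. -/
lemma exists_frobenius_hom {R K : Type} [CommRing R] [Field K] [Algebra R K]
    (p : ℕ) [Fact p.Prime] [CharP R p] (e : ℕ) {n : ℕ} (f : Fin n → R) (f0 c : R)
    (hc : algebraMap R K c ≠ 0) (v : Fin n → R)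
    (hv : ∑ i, v i * f i ^ p ^ e = c * f0 ^ p ^ e) :
    ∃ Φ : forcingAlgebra R n f f0 →+* K,
      (∀ r, Φ (algebraMap R _ r) = algebraMap R K (r ^ p ^ e)) ∧
      ∀ i, algebraMap R K c * Φ (Ideal.Quotient.mk _ (MvPolynomial.X i)) =
        algebraMap R K (- v i) := by
  let Ψ : MvPolynomial (Fin n) R →+* K :=
    eval₂Hom ((algebraMap R K).comp (iterateFrobenius R p e))
      (fun i => algebraMap R K (- v i) / algebraMap R K c)
  have hΨC : ∀ r, Ψ (MvPolynomial.C r) = algebraMap R K (r ^ p ^ e) := fun r => by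
    simp [Ψ, iterateFrobenius_def]
  have hΨX : ∀ i, algebraMap R K c * Ψ (MvPolynomial.X i) = algebraMap R K (- v i) := fun i => by
    simp only [Ψ, coe_eval₂Hom, eval₂_X]
    field_simp
  have hΨ : Ψ (∑ i, MvPolynomial.C (f i) * MvPolynomial.X i + MvPolynomial.C f0) = 0 := by
    refine (mul_eq_zero.1 (?_ : algebraMap R K c * _ = 0)).resolve_left hc
    rw [map_add, map_sum, mul_add, Finset.mul_sum, hΨC, ← map_mul, ← hv, map_sum,
      ← Finset.sum_add_distrib]
    refine Finset.sum_eq_zero fun i _ => ?_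
    rw [map_mul, mul_left_comm, hΨX, hΨC, ← map_mul, ← map_add]
    convert map_zero (algebraMap R K) using 2
    ring
  refine ⟨Ideal.Quotient.lift _ Ψ fun a ha => ?_, fun r => hΨC r, fun i => hΨX i⟩
  obtain ⟨b, rfl⟩ := Ideal.mem_span_singleton'.1 ha
  rw [map_mul, hΨ, mul_zero]

/-- If `f_0` lies in the tight closure of `(f_1, …, f_n)` and the class of `1 / (x_1 ⋯ x_d)` in
`H^d(A)` vanishes, then a fixed nonzero multiple of `(x_1 ⋯ x_d) ^ (s q)` lies in
`(x_1 ^ ((s + 1) q), …, x_d ^ ((s + 1) q))` for all large `q`. The multiplier is `c ^ D`, where `D`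
bounds the degrees of the polynomials in an equation for the vanishing: this makes it independent
of `q`. -/
lemma exists_uniform_multiplier {R : Type} [CommRing R] [IsDomain R] (p : ℕ) [Fact p.Prime]
    [CharP R p] {n : ℕ} (f : Fin n → R) (f0 : R)
    (hf : f0 ∈ tightClosure p (Ideal.span (Set.range f))) (x : ℕ → R) (d s : ℕ)
    (hs : (∏ i ∈ Finset.range d, x i) ^ s • (1 : forcingAlgebra R n f f0) ∈
      powSub x (forcingAlgebra R n f f0) d (s + 1)) :
    ∃ b : R, b ≠ 0 ∧ ∃ e₀ : ℕ, ∀ e ≥ e₀,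
      b * ((∏ i ∈ Finset.range d, x i) ^ s) ^ p ^ e ∈
        Ideal.span ((fun i => (x i ^ (s + 1)) ^ p ^ e) '' Set.Iio d) := by
  obtain ⟨c, hc0, e₀, hc⟩ := hf
  let K := FractionRing R
  have hinj : Function.Injective (algebraMap R K) := IsFractionRing.injective R K
  have hcK : algebraMap R K c ≠ 0 := fun h => hc0 (hinj (h.trans (map_zero _).symm))
  have hΦ : ∀ e, ∃ Φ : forcingAlgebra R n f f0 →+* K, e₀ ≤ e →
      (∀ r, Φ (algebraMap R _ r) = algebraMap R K (r ^ p ^ e)) ∧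
      ∀ i, ∃ v, algebraMap R K c * Φ (Ideal.Quotient.mk _ (MvPolynomial.X i)) =
        algebraMap R K v := by
    intro e
    by_cases he : e₀ ≤ e
    · obtain ⟨v, hv⟩ := exists_sum_of_mem_bracketPow p e f (hc e he)
      obtain ⟨Φ, h, h'⟩ := exists_frobenius_hom (K := K) p e f f0 c hcK v hv
      exact ⟨Φ, fun _ => ⟨h, fun i => ⟨_, h' i⟩⟩⟩
    · obtain ⟨v, hv⟩ := exists_sum_of_mem_bracketPow p e₀ f (hc e₀ le_rfl)
      obtain ⟨Φ, h, h'⟩ := exists_frobenius_hom (K := K) p e₀ f f0 c hcK v hv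
      exact ⟨Φ, fun h => absurd h he⟩
  choose Φ hΦ using hΦ
  -- a power of `c` clears the denominators of all images of a given element of `A`
  have hbd : ∀ a : forcingAlgebra R n f f0, ∃ D : ℕ, ∀ e ≥ e₀, ∃ r : R,
      algebraMap R K r = algebraMap R K c ^ D * Φ e a := by
    intro a
    obtain ⟨P, rfl⟩ := Ideal.Quotient.mk_surjective a
    induction P using MvPolynomial.induction_on with
    | C r => exact ⟨0, fun e he => ⟨r ^ p ^ e, by
        rw [pow_zero, one_mul]; exact ((hΦ e he).1 r).symm⟩⟩
    | add P P' h h' =>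
      obtain ⟨D, h⟩ := h
      obtain ⟨D', h'⟩ := h'
      refine ⟨D + D', fun e he => ?_⟩
      obtain ⟨r, hr⟩ := h e he
      obtain ⟨r', hr'⟩ := h' e he
      refine ⟨c ^ D' * r + c ^ D * r', ?_⟩
      rw [map_add, map_mul, map_mul, map_pow, map_pow, hr, hr', map_add, map_add]
      ring
    | mul_X P i h =>
      obtain ⟨D, h⟩ := h
      refine ⟨D + 1, fun e he => ?_⟩
      obtain ⟨r, hr⟩ := h e he
      obtain ⟨v, hv⟩ := (hΦ e he).2 i
      refine ⟨r * v, ?_⟩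
      rw [map_mul, hr, ← hv, map_mul, map_mul]
      ring
  have hpow : ∀ y ∈ powSub x (forcingAlgebra R n f f0) d (s + 1), ∃ D : ℕ, ∀ e ≥ e₀,
      ∃ r ∈ Ideal.span ((fun i => (x i ^ (s + 1)) ^ p ^ e) '' Set.Iio d),
        algebraMap R K r = algebraMap R K c ^ D * Φ e y := by
    intro y hy
    refine Submodule.smul_induction_on hy (fun r hr a _ => ?_) ?_
    · obtain ⟨D, h⟩ := hbd a
      refine ⟨D, fun e he => ?_⟩
      obtain ⟨r', hr'⟩ := h e he
      refine ⟨r' * r ^ p ^ e, Ideal.mul_mem_left _ _ ?_, ?_⟩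
      · have := pow_mem_span_pow p e hr
        rwa [Set.image_image] at this
      · rw [map_mul, hr', forcingAlgebra_smul_def, map_mul, (hΦ e he).1]
        ring
    · rintro a a' ⟨D, h⟩ ⟨D', h'⟩
      refine ⟨D + D', fun e he => ?_⟩
      obtain ⟨r, hr, hra⟩ := h e he
      obtain ⟨r', hr', hra'⟩ := h' e he
      refine ⟨c ^ D' * r + c ^ D * r', add_mem (Ideal.mul_mem_left _ _ hr)
        (Ideal.mul_mem_left _ _ hr'), ?_⟩
      rw [map_add, map_mul, map_mul, map_pow, map_pow, hra, hra', map_add]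
      ring
  obtain ⟨D, h⟩ := hpow _ hs
  refine ⟨c ^ D, pow_ne_zero _ hc0, e₀, fun e he => ?_⟩
  obtain ⟨r, hr, hre⟩ := h e he
  rw [forcingAlgebra_smul_def, mul_one, (hΦ e he).1, ← map_pow, ← map_mul] at hre
  rwa [← hinj hre]

/-- In a finite domain extension of a power series ring no nonzero element multiplies
`(X_1 ⋯ X_d) ^ (s q)` into `(X_1 ^ ((s + 1) q), …, X_d ^ ((s + 1) q))` for all large `q`. A linear
functional to the power series ring reduces this to power series, where the coefficients of the
multiplier of exponents less than `q` have to vanish. -/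
lemma not_uniform_multiplier {k R : Type} [Field k] [CommRing R] [IsDomain R] {d : ℕ}
    [Algebra (MvPowerSeries (Fin d) k) R] [Module.Finite (MvPowerSeries (Fin d) k) R]
    (hinj : Function.Injective (algebraMap (MvPowerSeries (Fin d) k) R))
    (p : ℕ) (hp : 1 < p) (x : ℕ → R)
    (hx : ∀ i : Fin d, algebraMap (MvPowerSeries (Fin d) k) R (MvPowerSeries.X i) = x i)
    (b : R) (hb : b ≠ 0) (s e₀ : ℕ)
    (h : ∀ e ≥ e₀, b * ((∏ i ∈ Finset.range d, x i) ^ s) ^ p ^ e ∈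
        Ideal.span ((fun i => (x i ^ (s + 1)) ^ p ^ e) '' Set.Iio d)) : False := by
  let S := MvPowerSeries (Fin d) k
  have hdom : IsDomain S := NoZeroDivisors.to_isDomain (MvPowerSeries (Fin d) k)
  have hfs : FaithfulSMul S R := (faithfulSMul_iff_algebraMap_injective S R).2 hinj
  have halg : Algebra.IsAlgebraic S R := inferInstance
  obtain ⟨g, hg0, b', hgb⟩ := (halg.isAlgebraic b).exists_nonzero_dvd
    (mem_nonZeroDivisors_of_ne_zero hb)
  obtain ⟨φ, hφ⟩ := exists_functional_ne_zero (D := S) (M := R) (fun a m ham => by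
    rw [Algebra.smul_def, mul_eq_zero] at ham
    exact ham.imp_left fun h => hinj (h.trans (map_zero _).symm)) 1 one_ne_zero
  have hx' : ∏ i ∈ Finset.range d, x i =
      algebraMap S R (∏ i : Fin d, (MvPowerSeries.X i : S)) := by
    rw [map_prod, Finset.prod_range]
    exact Finset.prod_congr rfl fun i _ => (hx i).symm
  have hspan : ∀ (e : ℕ), ∀ r ∈ Ideal.span ((fun i => (x i ^ (s + 1)) ^ p ^ e) '' Set.Iio d),
      ∀ a : Fin d →₀ ℕ, (∀ i, a i < (s + 1) * p ^ e) → ∀ r',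
        MvPowerSeries.coeff a (φ (r * r')) = 0 := by
    intro e r hr a ha
    induction hr using Submodule.span_induction with
    | mem r hr =>
      obtain ⟨i, hi, rfl⟩ := hr
      intro r'
      have h1 : (x i ^ (s + 1)) ^ p ^ e * r' =
          (MvPowerSeries.X (⟨i, hi⟩ : Fin d) : S) ^ ((s + 1) * p ^ e) • r' := by
        rw [Algebra.smul_def, map_pow, hx, pow_mul]
      change MvPowerSeries.coeff a (φ ((x i ^ (s + 1)) ^ p ^ e * r')) = 0
      rw [h1, map_smul]
      exact MvPowerSeries.X_pow_dvd_iff.1 (Dvd.intro _ rfl) a (ha _)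
    | zero => intro r'; rw [zero_mul, map_zero, map_zero]
    | add r₁ r₂ _ _ h₁ h₂ => intro r'; rw [add_mul, map_add, map_add, h₁, h₂, add_zero]
    | smul c r _ h' => intro r'; rw [smul_eq_mul, mul_assoc, mul_left_comm]; exact h' _
  refine mul_ne_zero hg0 hφ (MvPowerSeries.ext fun a => ?_)
  set e := e₀ + ∑ i, a i with he
  have hae : ∀ i, a i < p ^ e := fun i => by
    have h1 := Finset.single_le_sum (f := fun l => a l) (fun _ _ => Nat.zero_le _)
      (Finset.mem_univ i)
    have h2 := Nat.lt_pow_self hp (n := e)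
    have h3 : a i ≤ ∑ i, a i := h1
    omega
  have h1 := hspan e _ (h e (Nat.le_add_right _ _))
    (a + Finsupp.equivFunOnFinite.symm fun _ => s * p ^ e) (fun i => by
      have := hae i
      simp only [Finsupp.add_apply, Finsupp.equivFunOnFinite_symm_apply_apply]
      rw [add_mul, one_mul]; omega) b'
  have h2 : b * ((∏ i ∈ Finset.range d, x i) ^ s) ^ p ^ e * b' =
      ((∏ i : Fin d, (MvPowerSeries.X i : S)) ^ (s * p ^ e) * g) • (1 : R) := by
    rw [Algebra.smul_def, map_mul, hgb, hx', ← map_pow, ← map_pow, ← pow_mul]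
    ring
  have h3 : (∏ i : Fin d, (MvPowerSeries.X i : S)) ^ (s * p ^ e) =
      MvPowerSeries.monomial (Finsupp.equivFunOnFinite.symm fun _ => s * p ^ e) 1 := by
    rw [← Finset.prod_pow]
    simp only [MvPowerSeries.X_pow_eq, MvPowerSeries.prod_monomial, Finset.prod_const_one]
    congr 2
    refine Finsupp.ext fun i => ?_
    rw [Finsupp.finsetSum_apply]
    simp only [Finsupp.single_apply, Finsupp.equivFunOnFinite_symm_apply_apply,
      Finset.sum_ite_eq', Finset.mem_univ, if_true]
  rw [h2, map_smul, h3, smul_eq_mul, mul_assoc, add_comm a,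
    MvPowerSeries.coeff_add_monomial_mul, one_mul] at h1
  rw [h1, map_zero]

/-- A nonzero `R`-linear functional `ψ` on the forcing algebra puts `f_0` into the tight closure,
with multiplier `c = ψ z`: apply `a ↦ ψ (a z)` to `f_0 ^ q = ± ∑ f_i ^ q T_i ^ q`. -/
lemma mem_tightClosure_of_functional {R : Type} [CommRing R] (p : ℕ) [Fact p.Prime] [CharP R p]
    {n : ℕ} (f : Fin n → R) (f0 : R) (ψ : forcingAlgebra R n f f0 →ₗ[R] R)
    (z : forcingAlgebra R n f f0) (hz : ψ z ≠ 0) :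
    f0 ∈ tightClosure p (Ideal.span (Set.range f)) := by
  refine ⟨ψ z, hz, 0, fun e _ => ?_⟩
  let T : Fin n → forcingAlgebra R n f f0 := fun i => Ideal.Quotient.mk _ (MvPolynomial.X i)
  -- the Frobenius identities hold in `R[T]`, of characteristic `p`, hence in its quotient `A`,
  -- which may be the zero ring
  have hfrob : algebraMap R (forcingAlgebra R n f f0) (f0 ^ p ^ e) +
      ∑ i, algebraMap R (forcingAlgebra R n f f0) (f i ^ p ^ e) * T i ^ p ^ e = 0 := by
    have h1 : (∑ i, MvPolynomial.C (f i) * MvPolynomial.X i + MvPolynomial.C f0 :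
        MvPolynomial (Fin n) R) ^ p ^ e = ∑ i, MvPolynomial.C (f i ^ p ^ e) *
          MvPolynomial.X i ^ p ^ e + MvPolynomial.C (f0 ^ p ^ e) := by
      rw [add_pow_char_pow, sum_pow_char_pow, map_pow]
      simp only [mul_pow, map_pow]
    have h2 : Ideal.Quotient.mk (Ideal.span
        {(∑ i, MvPolynomial.C (f i) * MvPolynomial.X i) + MvPolynomial.C f0})
        ((∑ i, MvPolynomial.C (f i) * MvPolynomial.X i + MvPolynomial.C f0 :
          MvPolynomial (Fin n) R) ^ p ^ e) = 0 :=
      Ideal.Quotient.eq_zero_iff_mem.2 (Ideal.pow_mem_of_mem _ (Ideal.subset_span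
        (Set.mem_singleton _)) _ (pow_pos (Fact.out : p.Prime).pos _))
    rw [h1, map_add, map_sum] at h2
    refine ((add_comm _ _).trans (congrArg₂ (· + ·) (Finset.sum_congr rfl fun i _ => ?_) rfl)).trans
      h2
    rw [map_mul, map_pow _ (MvPolynomial.X i)]; rfl
  have h3 : ψ z * f0 ^ p ^ e = - ∑ i, f i ^ p ^ e * ψ (T i ^ p ^ e * z) := by
    have h4 : f0 ^ p ^ e • z = - ∑ i, f i ^ p ^ e • (T i ^ p ^ e * z) := by
      rw [eq_neg_iff_add_eq_zero, ← zero_mul z, ← hfrob, add_mul, Finset.sum_mul]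
      simp only [forcingAlgebra_smul_def, mul_assoc]
    have h5 := congrArg ψ h4
    rw [map_smul, map_neg, map_sum, smul_eq_mul, mul_comm] at h5
    simpa only [map_smul, smul_eq_mul] using h5
  rw [h3]
  refine neg_mem (sum_mem fun i _ => Ideal.mul_mem_right _ _ ?_)
  exact Ideal.subset_span ⟨f i, Ideal.subset_span ⟨i, rfl⟩, rfl⟩

end Main

/-- Let `(R, m)` be a complete Noetherian local domain of Krull dimension
`d` and characteristic `p > 0`, and let `A` be the forcing algebra for the data
`f_1,…,f_n; f_0`. Then `f_0 ∈ (f_1,…,f_n)^*` if and only if the local cohomology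
`H^d_m(A)` of `A` as an `R`-module is nonzero. -/
theorem statement7 (R : Type) [CommRing R] [IsLocalRing R] [IsNoetherianRing R] [IsDomain R]
    [IsAdicComplete (IsLocalRing.maximalIdeal R) R]
    (p : ℕ) [Fact p.Prime] [CharP R p]
    (d : ℕ) (hd : ringKrullDim R = d)
    (n : ℕ) (f : Fin n → R) (f0 : R) :
    f0 ∈ tightClosure p (Ideal.span (Set.range f)) ↔
      Nontrivial ((localCohomology (IsLocalRing.maximalIdeal R) d).obj
        (ModuleCat.of R (forcingAlgebra R n f f0))) := by
  obtain ⟨x, g, hx, hgx, hgfin, hginj⟩ := exists_noether_normalization R p d hd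
  rw [← not_subsingleton_iff_nontrivial, LocCoh.subsingleton_iff _ x d hx]
  let k := IsLocalRing.ResidueField R
  let S := MvPowerSeries (Fin d) k
  let _ : Algebra S R := g.toAlgebra
  have hfin : Module.Finite S R := hgfin
  have hdom : IsDomain S := NoZeroDivisors.to_isDomain (MvPowerSeries (Fin d) k)
  constructor
  · intro hf hH
    obtain ⟨s, hs⟩ := hH 1 1
    obtain ⟨b, hb, e₀, h⟩ := exists_uniform_multiplier p f f0 hf x d s hs
    exact not_uniform_multiplier (k := k) hginj p (Fact.out : p.Prime).one_lt x hgx b hb s e₀ h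
  · intro hH
    push Not at hH
    obtain ⟨t, z, hz⟩ := hH
    let A := forcingAlgebra R n f f0
    let _ : Module S A := Module.compHom A g
    have hsm : ∀ (a : S) (y : A), a • y = g a • y := fun _ _ => rfl
    have htower : IsScalarTower S R A := ⟨fun a r y => by
      rw [hsm, Algebra.smul_def, mul_smul]; rfl⟩
    have hprod : g (∏ i, (MvPowerSeries.X i : S)) = ∏ i ∈ Finset.range d, x i := by
      rw [map_prod, Finset.prod_range]
      exact Finset.prod_congr rfl fun i _ => hgx i
    obtain ⟨φ, hφ⟩ := exists_functional_of_cech_ne_zero (k := k) (d := d) t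
      ((∏ i, (MvPowerSeries.X i : S)) • z) (by
        intro s hs
        refine hz (s + 1) ?_
        rw [smul_smul, ← pow_succ, hsm, map_pow, hprod] at hs
        refine Submodule.smul_induction_on (p := fun y => y ∈ powSub x A d (s + 1 + t)) hs
          (fun r hr a _ => ?_) fun _ _ => add_mem
        rw [hsm]
        refine Submodule.smul_mem_smul ?_ Submodule.mem_top
        have h1 := Ideal.mem_map_of_mem g hr
        rw [Ideal.map_span] at h1
        refine Ideal.span_mono ?_ h1
        rintro _ ⟨_, ⟨i, rfl⟩, rfl⟩
        refine ⟨i, i.2, ?_⟩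
        change x i ^ (s + 1 + t) = g (MvPowerSeries.X i ^ (s + (t + 1)))
        rw [map_pow, hgx, show s + 1 + t = s + (t + 1) by ring])
    obtain ⟨ψ, hψ⟩ := exists_functional_of_finite_extension (S := S) (R := R) φ _ hφ
    exact mem_tightClosure_of_functional p f f0 ψ _ hψ
end

section
/- Let (R,m) be a regular local ring containing a field of characteristic p > 0. Then every ideal I of R is tightly closed: I^* = I. -/
open IsLocalRing RingTheory.Sequence
open scoped Pointwise

/-! ### Regular local rings and their regular systems of parameters -/

lemma map_mk_maximalIdeal {R : Type*} [CommRing R] [IsLocalRing R] (I : Ideal R)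
    [IsLocalRing (R ⧸ I)] :
    (maximalIdeal R).map (Ideal.Quotient.mk I) = maximalIdeal (R ⧸ I) := by
  have hs := Ideal.Quotient.mk_surjective (I := I)
  have hloc : IsLocalHom (Ideal.Quotient.mk I) := IsLocalHom.of_surjective _ hs
  have hcomap : (maximalIdeal (R ⧸ I)).comap (Ideal.Quotient.mk I) = maximalIdeal R :=
    ((IsLocalRing.local_hom_TFAE (Ideal.Quotient.mk I)).out 0 4).1 hloc
  rw [← hcomap, Ideal.map_comap_of_surjective _ hs]

lemma ringKrullDim_le_length {R : Type*} [CommRing R] [IsLocalRing R] [IsNoetherianRing R]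
    (rs : List R) (h : Ideal.ofList rs = maximalIdeal R) : ringKrullDim R ≤ rs.length := by
  classical
  refine (ringKrullDim_le_spanFinrank_maximalIdeal R).trans ?_
  have h1 : (maximalIdeal R).spanFinrank ≤ rs.length := by
    rw [← h]
    have : {r | r ∈ rs} = (rs.toFinset : Set R) := by ext; simp
    refine (Submodule.spanFinrank_span_le_ncard_of_finite (s := {r | r ∈ rs})
      (this ▸ rs.toFinset.finite_toSet)).trans ?_
    rw [this, Set.ncard_coe_finset]
    exact rs.toFinset_card_le
  exact_mod_cast h1

lemma ringKrullDim_le_quotient_add_one {R : Type*} [CommRing R] [IsLocalRing R]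
    [IsNoetherianRing R] {x : R} (hx : x ∈ maximalIdeal R) :
    ringKrullDim R ≤ ringKrullDim (R ⧸ Ideal.span {x}) + 1 := by
  rw [← IsLocalRing.maximalIdeal_height_eq_ringKrullDim]
  exact Ideal.height_le_ringKrullDim_quotient_add_one hx

lemma natCast_le_of_succ_le_add_one {a : WithBot ℕ∞} {n : ℕ}
    (h : ((n + 1 : ℕ) : WithBot ℕ∞) ≤ a + 1) :
    (n : WithBot ℕ∞) ≤ a := by
  induction a with
  | bot => exact absurd h (by rw [WithBot.bot_add]; exact not_le.2 (WithBot.bot_lt_coe _))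
  | coe a =>
    have h' : ((n : ℕ∞) + 1) ≤ a + 1 := by exact_mod_cast h
    exact_mod_cast (ENat.add_le_add_iff_right ENat.one_ne_top).1 h'

/-- The bottom of a chain of `n + 1` primes is a prime `Q` with `dim R ⧸ Q ≥ n`. -/
theorem exists_prime_dim {R : Type*} [CommRing R] (n : ℕ)
    (h : (n : WithBot ℕ∞) ≤ ringKrullDim R) :
    ∃ Q : Ideal R, Q.IsPrime ∧ (n : WithBot ℕ∞) ≤ ringKrullDim (R ⧸ Q) := by
  obtain ⟨l, hl⟩ := Order.le_krullDim_iff.1 h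
  refine ⟨l.head.asIdeal, l.head.isPrime, ?_⟩
  rw [ringKrullDim_quotient]
  refine Order.le_krullDim_iff.2 ⟨⟨l.length, fun i => ⟨l i, ?_⟩, fun i => ?_⟩, hl⟩
  · exact PrimeSpectrum.asIdeal_le_asIdeal _ _ |>.2 (l.head_le i)
  · exact l.step i

/-- Killing the first of the generators of the maximal ideal lowers a lower bound for the Krull
dimension by at most one, and leaves the remaining generators generating. -/
lemma quotient_head {R : Type*} [CommRing R] [IsLocalRing R] [IsNoetherianRing R] {x : R}
    {t : List R} {n : ℕ} (h : Ideal.ofList (x :: t) = maximalIdeal R)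
    (hd : ((n + 1 : ℕ) : WithBot ℕ∞) ≤ ringKrullDim R) :
    ∃ _ : IsLocalRing (R ⧸ Ideal.span {x}),
      Ideal.ofList (t.map (Ideal.Quotient.mk (Ideal.span {x}))) =
        maximalIdeal (R ⧸ Ideal.span {x}) ∧
      (n : WithBot ℕ∞) ≤ ringKrullDim (R ⧸ Ideal.span {x}) := by
  have hx : x ∈ maximalIdeal R := by
    rw [← h]
    exact Ideal.subset_span (by simp)
  have hx1 : Ideal.span {x} ≠ ⊤ := by
    rw [Ne, Ideal.span_singleton_eq_top]
    exact (mem_maximalIdeal x).1 hx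
  have : Nontrivial (R ⧸ Ideal.span {x}) := Ideal.Quotient.nontrivial_iff.2 hx1
  have hloc : IsLocalRing (R ⧸ Ideal.span {x}) :=
    IsLocalRing.of_surjective' _ Ideal.Quotient.mk_surjective
  refine ⟨hloc, ?_, natCast_le_of_succ_le_add_one
    (hd.trans (ringKrullDim_le_quotient_add_one hx))⟩
  have hx0 : (Ideal.Quotient.mk (Ideal.span {x})) x = 0 :=
    Ideal.Quotient.eq_zero_iff_mem.2 (Ideal.mem_span_singleton_self x)
  rw [← map_mk_maximalIdeal, ← h, Ideal.map_ofList, List.map_cons, Ideal.ofList_cons, hx0]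
  simp only [Ideal.span_singleton_zero, bot_sup_eq]

/-- A regular local ring is a domain. By induction `R ⧸ (x)` is a domain of dimension `n`, where `x`
is the first generator. A prime `Q` with `dim R ⧸ Q ≥ n + 1` cannot contain `x`. It is contained in
`(x)`, since otherwise `R ⧸ (Q + (x))` would be a proper quotient of the domain `R ⧸ (x)` and have
dimension less than `n`. Hence `Q = x Q`, and `Q = 0` by Nakayama. -/
theorem isDomain_of_regular (n : ℕ) : ∀ (R : Type*) [CommRing R] [IsLocalRing R]
    [IsNoetherianRing R] (rs : List R), rs.length = n → Ideal.ofList rs = maximalIdeal R →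
    (n : WithBot ℕ∞) ≤ ringKrullDim R → IsDomain R := by
  induction n with
  | zero =>
    intro R _ _ _ rs hl h _
    obtain rfl := List.eq_nil_of_length_eq_zero hl
    rw [Ideal.ofList_nil] at h
    exact (isField_iff_maximalIdeal_eq.2 h.symm).isDomain
  | succ n ih =>
    intro R _ _ _ rs hl h hd
    match rs, hl, h with
    | x :: t, hl, h =>
    have hx : x ∈ maximalIdeal R := by
      rw [← h]; exact Ideal.subset_span (by simp)
    obtain ⟨hloc, hm, hd1⟩ := quotient_head h hd
    have hlen : t.length = n := by simpa using hl
    have hd2 : ringKrullDim (R ⧸ Ideal.span {x}) ≤ n := by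
      simpa [hlen] using ringKrullDim_le_length _ hm
    have hdom : IsDomain (R ⧸ Ideal.span {x}) := ih _ _ (by simpa using hlen) hm hd1
    obtain ⟨Q, hQ, hQd⟩ := exists_prime_dim _ hd
    have hxQ : x ∉ Q := by
      intro hxQ
      have h1 := ringKrullDim_le_of_surjective (Ideal.Quotient.factor
        ((Ideal.span_singleton_le_iff_mem (I := Q)).2 hxQ)) (Ideal.Quotient.factor_surjective _)
      have h2 := hQd.trans (h1.trans hd2)
      norm_cast at h2
      omega
    -- Otherwise `R ⧸ (x, a)` surjects onto `(R ⧸ Q) ⧸ (x)` and is too small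
    -- for `dim R ⧸ Q ≥ n + 1`.
    have hQx : Q ≤ Ideal.span {x} := by
      intro a ha
      by_contra hax
      set S := R ⧸ Ideal.span {x}
      have ha0 : (Ideal.Quotient.mk (Ideal.span {x}) a : S) ≠ 0 := by
        rwa [Ne, Ideal.Quotient.eq_zero_iff_mem]
      have h1 := ringKrullDim_quotient_succ_le_of_nonZeroDivisor
        (mem_nonZeroDivisors_of_ne_zero ha0)
      have : IsLocalRing (R ⧸ Q) := IsLocalRing.of_surjective' _ Ideal.Quotient.mk_surjective
      have hxm : Ideal.Quotient.mk Q x ∈ maximalIdeal (R ⧸ Q) := by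
        rw [← map_mk_maximalIdeal]; exact Ideal.mem_map_of_mem _ hx
      have h2 := ringKrullDim_le_quotient_add_one hxm
      let f : S →+* (R ⧸ Q) ⧸ Ideal.span {Ideal.Quotient.mk Q x} :=
        Ideal.Quotient.lift _ ((Ideal.Quotient.mk _).comp (Ideal.Quotient.mk Q)) (by
          intro b hb
          obtain ⟨c, rfl⟩ := Ideal.mem_span_singleton'.1 hb
          simp)
      have hf : Function.Surjective f := Ideal.Quotient.lift_surjective_of_surjective _ _
        (Ideal.Quotient.mk_surjective.comp Ideal.Quotient.mk_surjective)
      let g : S ⧸ Ideal.span {Ideal.Quotient.mk (Ideal.span {x}) a} →+*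
          (R ⧸ Q) ⧸ Ideal.span {Ideal.Quotient.mk Q x} :=
        Ideal.Quotient.lift _ f (by
          intro b hb
          obtain ⟨c, rfl⟩ := Ideal.mem_span_singleton'.1 hb
          rw [map_mul]
          have : f (Ideal.Quotient.mk (Ideal.span {x}) a) = 0 := by
            change Ideal.Quotient.mk _ (Ideal.Quotient.mk Q a) = 0
            rw [Ideal.Quotient.eq_zero_iff_mem.2 ha, map_zero]
          rw [this, mul_zero])
      have hg : Function.Surjective g := Ideal.Quotient.lift_surjective_of_surjective _ _ hf
      have h3 := ringKrullDim_le_of_surjective g hg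
      have h4 := ((hQd.trans h2).trans (add_le_add_left h3 1)).trans (h1.trans hd2)
      norm_cast at h4
      omega
    have hbot : Q = ⊥ := by
      refine Submodule.eq_bot_of_le_smul_of_le_jacobson_bot (Ideal.span {x}) Q
        (IsNoetherian.noetherian _) ?_ ?_
      · intro a ha
        obtain ⟨c, rfl⟩ := Ideal.mem_span_singleton'.1 (hQx ha)
        rw [smul_eq_mul, mul_comm c]
        exact Ideal.mul_mem_mul (Ideal.mem_span_singleton_self x)
          ((hQ.mem_or_mem ha).resolve_right hxQ)
      · rw [IsLocalRing.jacobson_eq_maximalIdeal _ bot_ne_top, Ideal.span_singleton_le_iff_mem]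
        exact hx
    rw [hbot] at hQ
    exact IsDomain.of_bot_isPrime R

/-- A generating set of the maximal ideal with at most `dim R` elements is a regular sequence. -/
theorem isWeaklyRegular_of_regular (n : ℕ) : ∀ (R : Type*) [CommRing R] [IsLocalRing R]
    [IsNoetherianRing R] (rs : List R), rs.length = n → Ideal.ofList rs = maximalIdeal R →
    (n : WithBot ℕ∞) ≤ ringKrullDim R → IsWeaklyRegular R rs := by
  induction n with
  | zero =>
    intro R _ _ _ rs hl h _
    obtain rfl := List.eq_nil_of_length_eq_zero hl
    exact .nil R R
  | succ n ih =>
    intro R _ _ _ rs hl h hd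
    have hdom := isDomain_of_regular _ R rs hl h hd
    match rs, hl, h with
    | x :: t, hl, h =>
    have hx : x ∈ maximalIdeal R := by
      rw [← h]; exact Ideal.subset_span (by simp)
    obtain ⟨hloc, hm, hd1⟩ := quotient_head h hd
    have hlen : t.length = n := by simpa using hl
    have hx0 : x ≠ 0 := by
      rintro rfl
      have h1 := hd.trans (ringKrullDim_le_length t (by rw [← h]; simp))
      rw [hlen] at h1
      norm_cast at h1
      omega
    have h2 := ih _ _ (by simpa using hlen) hm hd1
    refine .cons (IsSMulRegular.of_ne_zero hx0) ?_
    have h3 := (isWeaklyRegular_map_algebraMap_iff (R ⧸ Ideal.span {x})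
      (R ⧸ Ideal.span {x}) t).1 h2
    refine (LinearEquiv.isWeaklyRegular_congr
      (Submodule.quotEquivOfEq (Ideal.span {x}) _ ?_) t).1 h3
    rw [← Submodule.ideal_span_singleton_smul]; simp

/-! ### Lengths modulo powers of a regular sequence -/

/-- Powers of a regular sequence in the maximal ideal form a regular sequence. Permutability of
regular sequences moves the head to the end, where replacing it by a power is harmless. -/
lemma isWeaklyRegular_pow {R : Type*} [CommRing R] [IsLocalRing R] [IsNoetherianRing R]
    (n : ℕ) (rs : List R) (hrs : ∀ r ∈ rs, r ∈ maximalIdeal R) : ∀ (M : Type*) [AddCommGroup M]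
    [Module R M] [Module.Finite R M],
    IsWeaklyRegular M rs → IsWeaklyRegular M (rs.map (· ^ (n + 1))) := by
  induction rs with
  | nil => intro M _ _ _ _; exact .nil R M
  | cons x t ih =>
    intro M _ _ _ h
    have hx := hrs x (by simp)
    have ht : ∀ r ∈ t, r ∈ maximalIdeal R := fun r hr => hrs r (by simp [hr])
    have htp : ∀ r ∈ t.map (· ^ (n + 1)), r ∈ maximalIdeal R := by
      intro r hr
      obtain ⟨a, ha, rfl⟩ := List.mem_map.1 hr
      exact Ideal.pow_mem_of_mem _ (ht a ha) _ (Nat.succ_pos n)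
    rw [isWeaklyRegular_cons_iff] at h
    have h1 : IsWeaklyRegular M (x :: t.map (· ^ (n + 1))) := .cons h.1 (ih ht _ h.2)
    have h2 : IsWeaklyRegular M (t.map (· ^ (n + 1)) ++ [x]) := by
      refine IsLocalRing.isWeaklyRegular_of_perm_of_subset_maximalIdeal h1
        (List.perm_append_singleton _ _).symm ?_
      intro r hr
      rcases List.mem_cons.1 hr with rfl | hr
      exacts [hx, htp r hr]
    rw [isWeaklyRegular_append_iff, isWeaklyRegular_singleton_iff] at h2
    have h3 : IsWeaklyRegular M (t.map (· ^ (n + 1)) ++ [x ^ (n + 1)]) := by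
      rw [isWeaklyRegular_append_iff, isWeaklyRegular_singleton_iff]
      exact ⟨h2.1, h2.2.pow _⟩
    refine IsLocalRing.isWeaklyRegular_of_perm_of_subset_maximalIdeal h3
        (List.perm_append_singleton _ _) ?_
    intro r hr
    rcases List.mem_append.1 hr with hr | hr
    · exact htp r hr
    · rw [List.mem_singleton.1 hr]
      exact Ideal.pow_mem_of_mem _ hx _ (Nat.succ_pos n)

/-- Additivity of length along `0 → N ⧸ xⁿN → N ⧸ xⁿ⁺¹N → N ⧸ xN → 0`, the first map being `x`. -/
lemma length_quotSMulTop_pow {R : Type*} [CommRing R] {N : Type*} [AddCommGroup N] [Module R N]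
    {x : R} (hx : IsSMulRegular N x) (n : ℕ) :
    Module.length R (QuotSMulTop (x ^ n) N) = n * Module.length R (QuotSMulTop x N) := by
  induction n with
  | zero =>
    have : Subsingleton (QuotSMulTop (x ^ 0) N) := by
      rw [Submodule.Quotient.subsingleton_iff]; simp
    simp
  | succ n ih =>
    let f : QuotSMulTop (x ^ n) N →ₗ[R] QuotSMulTop (x ^ (n + 1)) N :=
      Submodule.mapQ _ _ (LinearMap.lsmul R N x) (by
        intro y hy
        obtain ⟨z, -, rfl⟩ := (Submodule.mem_smul_pointwise_iff_exists _ _ _).1 hy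
        refine (Submodule.mem_smul_pointwise_iff_exists _ _ _).2 ⟨z, trivial, ?_⟩
        simp [pow_succ, mul_smul])
    let g : QuotSMulTop (x ^ (n + 1)) N →ₗ[R] QuotSMulTop x N :=
      Submodule.mapQ _ _ LinearMap.id (by
        intro y hy
        obtain ⟨z, -, rfl⟩ := (Submodule.mem_smul_pointwise_iff_exists _ _ _).1 hy
        refine (Submodule.mem_smul_pointwise_iff_exists _ _ _).2 ⟨x ^ n • z, trivial, ?_⟩
        simp [pow_succ', mul_smul])
    have hf : Function.Injective f := by
      rw [injective_iff_map_eq_zero]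
      intro y hy
      obtain ⟨y, rfl⟩ := Submodule.mkQ_surjective _ y
      have hy' : x • y ∈ (x ^ (n + 1) • ⊤ : Submodule R N) :=
        (Submodule.Quotient.mk_eq_zero _).1 hy
      obtain ⟨z, -, hz⟩ := (Submodule.mem_smul_pointwise_iff_exists _ _ _).1 hy'
      rw [pow_succ', mul_smul] at hz
      refine (Submodule.Quotient.mk_eq_zero _).2 ?_
      rw [← hx hz]
      exact Submodule.smul_mem_pointwise_smul _ _ _ trivial
    have hg : Function.Surjective g := by
      intro y
      obtain ⟨y, rfl⟩ := Submodule.mkQ_surjective _ y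
      exact ⟨Submodule.mkQ _ y, rfl⟩
    have hfg : Function.Exact f g := by
      intro y
      obtain ⟨y, rfl⟩ := Submodule.mkQ_surjective _ y
      constructor
      · intro hy
        have hy' : y ∈ (x • ⊤ : Submodule R N) := (Submodule.Quotient.mk_eq_zero _).1 hy
        obtain ⟨z, -, rfl⟩ := (Submodule.mem_smul_pointwise_iff_exists _ _ _).1 hy'
        exact ⟨Submodule.mkQ _ z, rfl⟩
      · rintro ⟨z, hz⟩
        obtain ⟨z, rfl⟩ := Submodule.mkQ_surjective _ z
        rw [← hz]
        refine (Submodule.Quotient.mk_eq_zero _).2 ?_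
        exact Submodule.smul_mem_pointwise_smul _ _ _ trivial
    rw [Module.length_eq_add_of_exact f g hf hg hfg, ih]
    push_cast
    ring

lemma length_quot_pow {R : Type*} [CommRing R] [IsLocalRing R] [IsNoetherianRing R]
    (n : ℕ) (rs : List R) (hrs : ∀ r ∈ rs, r ∈ maximalIdeal R) : ∀ (M : Type*) [AddCommGroup M]
    [Module R M] [Module.Finite R M], IsWeaklyRegular M rs →
    Module.length R (M ⧸ (Ideal.ofList (rs.map (· ^ (n + 1))) • ⊤ : Submodule R M)) =
      ((n + 1) ^ rs.length : ℕ) * Module.length R (M ⧸ (Ideal.ofList rs • ⊤ : Submodule R M)) := by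
  induction rs with
  | nil => intro M _ _ _ _; rw [List.map_nil]; simp
  | cons x t ih =>
    intro M _ _ _ h
    have hx := hrs x (by simp)
    have ht : ∀ r ∈ t, r ∈ maximalIdeal R := fun r hr => hrs r (by simp [hr])
    have htp : ∀ r ∈ t.map (· ^ (n + 1)), r ∈ maximalIdeal R := by
      intro r hr
      obtain ⟨a, ha, rfl⟩ := List.mem_map.1 hr
      exact Ideal.pow_mem_of_mem _ (ht a ha) _ (Nat.succ_pos n)
    rw [isWeaklyRegular_cons_iff] at h
    have h1 : IsWeaklyRegular M (x :: t.map (· ^ (n + 1))) :=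
      .cons h.1 (isWeaklyRegular_pow n t ht _ h.2)
    have h2 : IsWeaklyRegular M (t.map (· ^ (n + 1)) ++ [x]) := by
      refine IsLocalRing.isWeaklyRegular_of_perm_of_subset_maximalIdeal h1
        (List.perm_append_singleton _ _).symm ?_
      intro r hr
      rcases List.mem_cons.1 hr with rfl | hr
      exacts [hx, htp r hr]
    rw [isWeaklyRegular_append_iff, isWeaklyRegular_singleton_iff] at h2
    rw [List.map_cons, (Submodule.quotOfListConsSMulTopEquivQuotSMulTopOuter M _ _).length_eq,
      length_quotSMulTop_pow h2.2,
      ← (Submodule.quotOfListConsSMulTopEquivQuotSMulTopOuter M _ _).length_eq,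
      (Submodule.quotOfListConsSMulTopEquivQuotSMulTopInner M _ _).length_eq,
      ih ht _ h.2, (Submodule.quotOfListConsSMulTopEquivQuotSMulTopInner M _ _).length_eq]
    simp [pow_succ']
    ring

/-! ### Frobenius powers and colon ideals -/

lemma bracketPow_eq_map {R : Type} [CommRing R] (p : ℕ) [Fact p.Prime] [CharP R p] (I : Ideal R)
    (e : ℕ) : bracketPow I (p ^ e) = I.map (iterateFrobenius R p e) := rfl

lemma bracketPow_mono {R : Type} [CommRing R] {I J : Ideal R} (h : I ≤ J) (q : ℕ) :
    bracketPow I q ≤ bracketPow J q := Ideal.span_mono (Set.image_mono h)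

lemma bracketPow_le_pow {R : Type} [CommRing R] (I : Ideal R) (q : ℕ) :
    bracketPow I q ≤ I ^ q := by
  refine Ideal.span_le.2 ?_
  rintro _ ⟨a, ha, rfl⟩
  exact Ideal.pow_mem_pow ha q

lemma bracketPow_ofList {R : Type} [CommRing R] (p : ℕ) [Fact p.Prime] [CharP R p] (rs : List R)
    (e : ℕ) : bracketPow (Ideal.ofList rs) (p ^ e) = Ideal.ofList (rs.map (· ^ p ^ e)) := by
  rw [bracketPow_eq_map p, Ideal.map_ofList]
  rfl

lemma length_quotient_le {R : Type*} [CommRing R] {I J : Ideal R} (h : I ≤ J) :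
    Module.length R (R ⧸ J) ≤ Module.length R (R ⧸ I) := by
  rw [Module.length_quotient, Module.length_quotient]
  exact Order.coheight_anti h

/-- Length is additive along `0 → R ⧸ (A : f) → R ⧸ A → R ⧸ (A + (f)) → 0`. The colon ideal
`(A : f)` is encoded here and below as the preimage of `A` under multiplication by `f`. -/
lemma length_quotient_eq_add_colon {R : Type*} [CommRing R] (A : Ideal R) (f : R) :
    Module.length R (R ⧸ A) =
      Module.length R (R ⧸ (Submodule.comap (LinearMap.lsmul R R f) A)) +
        Module.length R (R ⧸ (A ⊔ Ideal.span {f})) := by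
  refine Module.length_eq_add_of_exact
    (Submodule.mapQ _ A (LinearMap.lsmul R R f) le_rfl)
    (Submodule.mapQ A (A ⊔ Ideal.span {f}) LinearMap.id le_sup_left) ?_ ?_ ?_
  · rw [injective_iff_map_eq_zero]
    intro y hy
    obtain ⟨y, rfl⟩ := Submodule.mkQ_surjective _ y
    exact (Submodule.Quotient.mk_eq_zero _).2 ((Submodule.Quotient.mk_eq_zero A).1 hy)
  · intro y
    obtain ⟨y, rfl⟩ := Submodule.mkQ_surjective _ y
    exact ⟨Submodule.mkQ _ y, rfl⟩
  · intro y
    obtain ⟨y, rfl⟩ := Submodule.mkQ_surjective _ y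
    constructor
    · intro hy
      have hy' : y ∈ A ⊔ Ideal.span {f} := (Submodule.Quotient.mk_eq_zero _).1 hy
      obtain ⟨a, ha, b, hb, rfl⟩ := Submodule.mem_sup.1 hy'
      obtain ⟨c, rfl⟩ := Ideal.mem_span_singleton'.1 hb
      refine ⟨Submodule.mkQ _ c, (Submodule.Quotient.eq A).2 ?_⟩
      have : f * c - (a + c * f) = -a := by ring
      simpa [this] using ha
    · rintro ⟨z, hz⟩
      obtain ⟨z, rfl⟩ := Submodule.mkQ_surjective _ z
      rw [← hz]
      refine (Submodule.Quotient.mk_eq_zero _).2 ?_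
      exact Ideal.mem_sup_right (Ideal.mul_mem_right _ _ (Ideal.mem_span_singleton_self f))

/-- An element outside `J` killed by a power of `m` modulo `J` has a multiple in the
socle modulo `J`. -/
lemma exists_socle {R : Type*} [CommRing R] (m J : Ideal R) (k : ℕ) : ∀ f : R, f ∉ J →
    (∀ a ∈ m ^ k, a * f ∈ J) → ∃ r, r * f ∉ J ∧ ∀ x ∈ m, x * (r * f) ∈ J := by
  induction k with
  | zero => intro f hf h; exact absurd (by simpa using h 1 (by simp)) hf
  | succ k ih =>
    intro f hf h
    by_cases hm : ∀ x ∈ m, x * f ∈ J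
    · exact ⟨1, by simpa using hf, by simpa using hm⟩
    · push Not at hm
      obtain ⟨x, hx, hxf⟩ := hm
      obtain ⟨r, hr, hr'⟩ := ih (x * f) hxf (fun a ha => by
        rw [← mul_assoc]
        exact h _ (by rw [pow_succ]; exact Ideal.mul_mem_mul ha hx))
      exact ⟨r * x, by rwa [mul_assoc], by simpa only [mul_assoc] using hr'⟩

lemma colon_eq_maximalIdeal {R : Type*} [CommRing R] [IsLocalRing R] {I : Ideal R} {f : R}
    (hf : f ∉ I) (hm : ∀ x ∈ maximalIdeal R, x * f ∈ I) :
    Submodule.comap (LinearMap.lsmul R R f) I = maximalIdeal R := by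
  symm
  refine (maximalIdeal.isMaximal R).eq_of_le ?_ ?_
  · rw [Ideal.ne_top_iff_one]
    simpa using hf
  · intro x hx
    simpa [mul_comm] using hm x hx

lemma length_quotient_maximalIdeal (R : Type*) [CommRing R] [IsLocalRing R] :
    Module.length R (R ⧸ maximalIdeal R) = 1 := by
  rw [Module.length_eq_one_iff, isSimpleModule_iff_isCoatom]
  exact (maximalIdeal.isMaximal R).out

lemma bracketPow_sup_span {R : Type} [CommRing R] (p : ℕ) [Fact p.Prime] [CharP R p]
    (I : Ideal R) (f : R) (e : ℕ) : bracketPow (I ⊔ Ideal.span {f}) (p ^ e) =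
      bracketPow I (p ^ e) ⊔ Ideal.span {f ^ p ^ e} := by
  rw [bracketPow_eq_map p, bracketPow_eq_map p, Ideal.map_sup, Ideal.map_span, Set.image_singleton]
  rfl

lemma bracketPow_maximalIdeal_le_colon {R : Type} [CommRing R] [IsLocalRing R] (p : ℕ)
    {I : Ideal R} {f : R} (hm : ∀ x ∈ maximalIdeal R, x * f ∈ I) (e : ℕ) :
    bracketPow (maximalIdeal R) (p ^ e) ≤
      Submodule.comap (LinearMap.lsmul R R (f ^ p ^ e)) (bracketPow I (p ^ e)) := by
  refine Ideal.span_le.2 ?_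
  rintro _ ⟨x, hx, rfl⟩
  have : (x * f) ^ p ^ e ∈ bracketPow I (p ^ e) := Ideal.subset_span ⟨_, hm x hx, rfl⟩
  simpa [mul_comm, mul_pow] using this

/-- For `𝔪`-primary `I ≤ J`, in subtraction-free form:
`ℓ(R ⧸ I^[q]) - ℓ(R ⧸ J^[q]) ≤ ℓ(R ⧸ 𝔪^[q]) (ℓ(R ⧸ I) - ℓ(R ⧸ J))`.
Climbing from `I` to `J` through socle elements `f`, each step contributes `ℓ(R ⧸ (I^[q] : f^q))`
on the left, which is at most `ℓ(R ⧸ 𝔪^[q])` because `𝔪^[q] f^q ⊆ I^[q]`. -/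
lemma length_bracketPow_add_le {R : Type} [CommRing R] [IsLocalRing R] [IsNoetherianRing R]
    (p : ℕ) [Fact p.Prime] [CharP R p] (e N : ℕ) (J : Ideal R) (I : Ideal R) :
    maximalIdeal R ^ N ≤ I → I ≤ J →
    Module.length R (R ⧸ bracketPow I (p ^ e)) +
        Module.length R (R ⧸ bracketPow (maximalIdeal R) (p ^ e)) * Module.length R (R ⧸ J) ≤
      Module.length R (R ⧸ bracketPow J (p ^ e)) +
        Module.length R (R ⧸ bracketPow (maximalIdeal R) (p ^ e)) * Module.length R (R ⧸ I) := by
  induction I using IsNoetherian.induction with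
  | _ I ih =>
  intro hN hIJ
  rcases hIJ.eq_or_lt with rfl | hlt
  · exact le_rfl
  obtain ⟨g, hgJ, hgI⟩ := SetLike.exists_of_lt hlt
  obtain ⟨r, hr, hr'⟩ := exists_socle (maximalIdeal R) I N g hgI
    (fun a ha => Ideal.mul_mem_right _ _ (hN ha))
  set f := r * g
  have hlt' : I < I ⊔ Ideal.span {f} := by
    refine lt_of_le_of_ne le_sup_left fun h => hr ?_
    rw [h]
    exact Ideal.mem_sup_right (Ideal.mem_span_singleton_self f)
  have h1 := ih _ hlt' (hN.trans le_sup_left) (sup_le hIJ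
    ((Ideal.span_singleton_le_iff_mem _).2 (Ideal.mul_mem_left _ _ hgJ)))
  have h2 := length_quotient_eq_add_colon I f
  rw [colon_eq_maximalIdeal hr hr', length_quotient_maximalIdeal] at h2
  have h3 := length_quotient_eq_add_colon (bracketPow I (p ^ e)) (f ^ p ^ e)
  rw [← bracketPow_sup_span] at h3
  have h4 := length_quotient_le (bracketPow_maximalIdeal_le_colon p hr' e)
  rw [h2, h3, mul_add, mul_one, add_assoc, add_left_comm (Module.length R (R ⧸ bracketPow J _))]
  exact add_le_add h4 h1

lemma ofList_pow_le {R : Type*} [CommRing R] {m : Ideal R} {rs : List R} (h : Ideal.ofList rs = m)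
    (N : ℕ) : Ideal.ofList (rs.map (· ^ N)) ≤ m ^ N := by
  refine Ideal.span_le.2 ?_
  intro y hy
  obtain ⟨a, ha, rfl⟩ := List.mem_map.1 hy
  exact Ideal.pow_mem_pow (h ▸ Ideal.subset_span ha) N

lemma exists_pow_le_ofList_pow {R : Type*} [CommRing R] {m : Ideal R} {rs : List R}
    (h : Ideal.ofList rs = m) (N : ℕ) : ∃ K, m ^ K ≤ Ideal.ofList (rs.map (· ^ N)) := by
  refine Ideal.exists_pow_le_of_le_radical_of_fg ?_ ?_
  · rw [← h]
    refine Ideal.span_le.2 fun a ha => ⟨N, Ideal.subset_span (List.mem_map.2 ⟨a, ha, rfl⟩)⟩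
  · rw [← h]
    classical
    refine ⟨rs.toFinset, ?_⟩
    simp [Ideal.ofList]

lemma length_quotient_ofList_pow {R : Type*} [CommRing R] [IsLocalRing R] [IsNoetherianRing R]
    {rs : List R} (h : Ideal.ofList rs = maximalIdeal R) (hreg : IsWeaklyRegular R rs) {n : ℕ}
    (hn : 0 < n) :
    Module.length R (R ⧸ Ideal.ofList (rs.map (· ^ n))) = (n ^ rs.length : ℕ) := by
  obtain ⟨n, rfl⟩ := Nat.exists_eq_succ_of_ne_zero hn.ne'
  have := length_quot_pow n rs (fun r hr => h ▸ Ideal.subset_span hr) R hreg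
  rw [smul_eq_mul, smul_eq_mul, Ideal.mul_top, Ideal.mul_top, h,
    length_quotient_maximalIdeal, mul_one] at this
  exact this

/-- If `I` is `𝔪`-primary and `(I : f) = 𝔪`, then `(I^[q] : f^q) ⊆ 𝔪^[q]`. With `Q` generated
by powers of the regular parameters and contained in `I`, one has `ℓ(R ⧸ Q^[q]) = q^d ℓ(R ⧸ Q)`, so
every step of a filtration from `Q` to `R` through `I` and `I + (f)` contributes exactly
`q^d = ℓ(R ⧸ 𝔪^[q])`. -/
lemma colon_le_bracketPow {R : Type} [CommRing R] [IsLocalRing R] [IsNoetherianRing R]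
    (p : ℕ) [Fact p.Prime] [CharP R p] {rs : List R} (h : Ideal.ofList rs = maximalIdeal R)
    (hreg : IsWeaklyRegular R rs) {I : Ideal R} {N : ℕ} (hN : maximalIdeal R ^ N ≤ I) {f : R}
    (hf : f ∉ I) (hm : ∀ x ∈ maximalIdeal R, x * f ∈ I) (e : ℕ) :
    Submodule.comap (LinearMap.lsmul R R (f ^ p ^ e)) (bracketPow I (p ^ e)) ≤
      bracketPow (maximalIdeal R) (p ^ e) := by
  have hq : 0 < p ^ e := pow_pos (Fact.out : p.Prime).pos e
  set q := p ^ e with hqdef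
  set Q := Ideal.ofList (rs.map (· ^ (N + 1))) with hQ
  have hQI : Q ≤ I := (ofList_pow_le h _).trans ((Ideal.pow_le_pow_right N.le_succ).trans hN)
  obtain ⟨K, hK⟩ := exists_pow_le_ofList_pow h (N + 1)
  have lm : Module.length R (R ⧸ bracketPow (maximalIdeal R) q) = (q ^ rs.length : ℕ) := by
    rw [← h, hqdef, bracketPow_ofList, length_quotient_ofList_pow h hreg hq]
  have lQ : Module.length R (R ⧸ Q) = ((N + 1) ^ rs.length : ℕ) :=
    length_quotient_ofList_pow h hreg N.succ_pos
  have hQq : bracketPow Q q = Ideal.ofList (rs.map (· ^ ((N + 1) * q))) := by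
    rw [hQ, hqdef, bracketPow_ofList, List.map_map]
    simp only [Function.comp_def, pow_mul]
  have lQq : Module.length R (R ⧸ bracketPow Q q) = (((N + 1) * q) ^ rs.length : ℕ) := by
    rw [hQq]
    exact length_quotient_ofList_pow h hreg (Nat.mul_pos N.succ_pos hq)
  set I' := I ⊔ Ideal.span {f}
  set A := Submodule.comap (LinearMap.lsmul R R (f ^ q)) (bracketPow I q)
  have h1 := length_bracketPow_add_le p e K I Q hK hQI
  have h2 := length_bracketPow_add_le p e N ⊤ I' (hN.trans le_sup_left) le_top
  have h3 := length_quotient_eq_add_colon I f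
  rw [colon_eq_maximalIdeal hf hm, length_quotient_maximalIdeal] at h3
  have h4 := length_quotient_eq_add_colon (bracketPow I q) (f ^ q)
  rw [hqdef, ← bracketPow_sup_span, ← hqdef] at h4
  have hmA : bracketPow (maximalIdeal R) q ≤ A := bracketPow_maximalIdeal_le_colon p hm e
  have t1 : Module.length R (R ⧸ (⊤ : Ideal R)) = 0 := Module.length_eq_zero
  have t2 : Module.length R (R ⧸ bracketPow (⊤ : Ideal R) q) = 0 := by
    have : bracketPow (⊤ : Ideal R) q = ⊤ := by
      rw [hqdef, bracketPow_eq_map p, Ideal.map_top]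
    rw [this, t1]
  rw [← hqdef, lm, lQ, lQq] at h1
  rw [← hqdef, t1, t2, lm, mul_zero, add_zero, zero_add] at h2
  -- All lengths involved are finite, so that the estimates become inequalities in `ℕ`.
  have fin : ∀ {B C : Ideal R} {k : ℕ}, B ≤ C → Module.length R (R ⧸ B) = k →
      ∃ l : ℕ, Module.length R (R ⧸ C) = l := fun {B C k} hBC hB =>
    ENat.ne_top_iff_exists.1 (ne_top_of_le_ne_top (hB ▸ ENat.natCast_ne_top k)
      (length_quotient_le hBC)) |>.imp fun _ => Eq.symm
  obtain ⟨a, ha⟩ := fin hQI lQ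
  obtain ⟨b, hb⟩ := fin (hQI.trans le_sup_left : Q ≤ I') lQ
  obtain ⟨aq, haq⟩ := fin (bracketPow_mono hQI q) lQq
  obtain ⟨bq, hbq⟩ := fin (bracketPow_mono (hQI.trans le_sup_left : Q ≤ I') q) lQq
  obtain ⟨c, hc⟩ := fin hmA lm
  rw [ha, haq] at h1
  rw [hb, hbq] at h2
  change _ = _ + Module.length R (R ⧸ I') at h3
  change _ = Module.length R (R ⧸ A) + Module.length R (R ⧸ bracketPow I' q) at h4
  rw [ha, hb] at h3
  rw [haq, hbq, hc] at h4
  norm_cast at h1 h2 h3 h4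
  have hle : q ^ rs.length ≤ c := by
    rw [mul_pow, h3] at h1
    nlinarith
  by_contra hnot
  have hlt : bracketPow (maximalIdeal R) q < A := lt_of_le_not_ge hmA hnot
  have := Order.coheight_strictAnti hlt (by
    rw [← Module.length_quotient, hc]; exact ENat.natCast_lt_top c)
  rw [← Module.length_quotient, ← Module.length_quotient, lm, hc] at this
  norm_cast at this
  omega

/-- In a regular local ring `(R, m)` of characteristic `p > 0`
(`m` is generated by `d` elements where `d` is the Krull dimension), every ideal is
tightly closed: `I^* = I`. -/
theorem statement8 (R : Type) [CommRing R] [IsLocalRing R] [IsNoetherianRing R]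
    (p : ℕ) [Fact p.Prime] [CharP R p]
    (hreg : ∃ s : Finset R, Ideal.span (s : Set R) = IsLocalRing.maximalIdeal R ∧
      (s.card : WithBot ℕ∞) = ringKrullDim R)
    (I : Ideal R) :
    tightClosure p I = (I : Set R) := by
  obtain ⟨s, hs, hcard⟩ := hreg
  have h : Ideal.ofList s.toList = maximalIdeal R := by
    rw [← hs]
    simp [Ideal.ofList]
  have hreg : IsWeaklyRegular R s.toList :=
    isWeaklyRegular_of_regular s.card R s.toList s.length_toList h hcard.le
  refine Set.Subset.antisymm ?_ fun f hf => ⟨1, one_ne_zero, 0, fun e _ => ?_⟩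
  · rintro f ⟨c, hc0, e₀, hc⟩
    by_contra hfI
    -- Krull's intersection theorem in `R ⧸ I` provides an `𝔪`-primary ideal above `I` missing `f`.
    obtain ⟨N, hN⟩ : ∃ N, f ∉ I ⊔ maximalIdeal R ^ N := by
      by_contra! hall
      have hmem : Ideal.Quotient.mk I f ∈
          (⨅ i : ℕ, maximalIdeal R ^ i • ⊤ : Submodule R (R ⧸ I)) := by
        rw [Submodule.mem_iInf]
        intro i
        obtain ⟨a, ha, b, hb, hab⟩ := Submodule.mem_sup.1 (hall i)
        have hb' : Ideal.Quotient.mk I f = b • (1 : R ⧸ I) := by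
          rw [← hab, map_add, Ideal.Quotient.eq_zero_iff_mem.2 ha, zero_add, Algebra.smul_def,
            mul_one]
          rfl
        rw [hb']
        exact Submodule.smul_mem_smul hb trivial
      rw [Ideal.iInf_pow_smul_eq_bot_of_isLocalRing _ (maximalIdeal.isMaximal R).ne_top] at hmem
      exact hfI (Ideal.Quotient.eq_zero_iff_mem.1 hmem)
    obtain ⟨r, hr, hr'⟩ := exists_socle (maximalIdeal R) (I ⊔ maximalIdeal R ^ N) N f hN
      (fun a ha => Ideal.mul_mem_right _ _ (Ideal.mem_sup_right ha))
    refine hc0 ?_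
    have hmem : c ∈ ⨅ k : ℕ, maximalIdeal R ^ k := by
      rw [Ideal.mem_iInf]
      intro k
      set e := max e₀ k
      have h1 : c * (r * f) ^ p ^ e ∈ bracketPow (I ⊔ maximalIdeal R ^ N) (p ^ e) := by
        rw [mul_pow, mul_left_comm]
        exact Ideal.mul_mem_left _ _ (bracketPow_mono le_sup_left _ (hc e (le_max_left _ _)))
      have h2 : c ∈ bracketPow (maximalIdeal R) (p ^ e) :=
        colon_le_bracketPow p h hreg le_sup_right hr hr' e (by
          rw [mul_comm] at h1
          exact h1)
      refine Ideal.pow_le_pow_right ?_ (bracketPow_le_pow _ _ h2)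
      exact (le_max_right _ _).trans (Nat.lt_pow_self (Fact.out : p.Prime).one_lt).le
    rwa [Ideal.iInf_pow_eq_bot_of_isLocalRing _ (maximalIdeal.isMaximal R).ne_top] at hmem
  · rw [one_mul]
    exact Ideal.subset_span ⟨f, hf, rfl⟩
end
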